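/- arXiv:2412.00018 — 3 statements merged into one kernel-verified Lean document; each statement's English description precedes it below -/
import Mathlib

section
/- Let A := {a ∈ C*_r(G) : j(a)(γ) = 0 for all γ ∈ G ∖ Ii} (a subset of C*_r(G)), and for x ∈ G⁽⁰⁾ let J_x := the norm closure of {a·d : a ∈ A, d ∈ C₀(G⁽⁰⁾), d(x) = 0}, where C₀(G⁽⁰⁾) is regarded as a subalgebra of C*_r(G). Then for every x ∈ G⁽⁰⁾, every a ∈ A satisfying j(a)(γ) = 0 for all γ ∈ Ii x belongs to J_x. -/
/-- A locally compact Hausdorff étale groupoid, modelled as a type `G` with a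
partially defined multiplication (encoded by a total function, meaningful on
composable pairs), inversion, and source and range maps into the unit space. -/
structure EtaleGroupoid (G : Type*) [TopologicalSpace G] where
  src : G → G
  rng : G → G
  mul : G → G → G
  inv : G → G
  src_src : ∀ γ, src (src γ) = src γ
  rng_src : ∀ γ, rng (src γ) = src γ
  src_rng : ∀ γ, src (rng γ) = rng γ
  rng_rng : ∀ γ, rng (rng γ) = rng γ
  mul_assoc' : ∀ a b c, src a = rng b → src b = rng c →
      mul (mul a b) c = mul a (mul b c)
  src_mul : ∀ a b, src a = rng b → src (mul a b) = src b
  rng_mul : ∀ a b, src a = rng b → rng (mul a b) = rng a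
  mul_src_self : ∀ a, mul a (src a) = a
  rng_self_mul : ∀ a, mul (rng a) a = a
  src_inv : ∀ a, src (inv a) = rng a
  rng_inv : ∀ a, rng (inv a) = src a
  inv_mul_self : ∀ a, mul (inv a) a = src a
  mul_inv_self : ∀ a, mul a (inv a) = rng a
  continuous_src : Continuous src
  continuous_rng : Continuous rng
  continuous_inv : Continuous inv
  continuous_mul : Continuous fun p : {p : G × G // src p.1 = rng p.2} => mul p.1.1 p.1.2
  isOpen_unitSpace : IsOpen {x | src x = x}
  etale : ∀ γ, ∃ U : Set G, IsOpen U ∧ γ ∈ U ∧ Set.InjOn src U ∧ IsOpen (src '' U)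

namespace EtaleGroupoid

variable {G : Type*} [TopologicalSpace G] (E : EtaleGroupoid G)

/-- The unit space `G⁽⁰⁾`. -/
def unitSpace : Set G := {x | E.src x = x}

/-- `Gx = s⁻¹(x)`. -/
def Gx (x : G) : Set G := {γ | E.src γ = x}

/-- `xG = r⁻¹(x)`. -/
def xG (x : G) : Set G := {γ | E.rng γ = x}

/-- The isotropy `Iso(G) = ⋃ₓ (xG ∩ Gx)`. -/
def Iso : Set G := {γ | E.src γ = E.rng γ}

/-- `Ii = Iso(G)°`, the interior of the isotropy. -/
def Ii : Set G := interior E.Iso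

/-- `Iicl`, the closure of `Ii` in `G`. -/
def Iicl : Set G := closure E.Ii

/-- `Ii` is abelian: elements of `Ii` with the same source commute. -/
def IsAbelianIi : Prop :=
  ∀ a ∈ E.Ii, ∀ b ∈ E.Ii, E.src a = E.src b → E.mul a b = E.mul b a

/-- An open bisection: an open set on which both `src` and `rng` are injective. -/
def IsOpenBisection (B : Set G) : Prop :=
  IsOpen B ∧ Set.InjOn E.src B ∧ Set.InjOn E.rng B

/-- The set product `CD = {γδ : γ ∈ C, δ ∈ D, s(γ) = r(δ)}`. -/
def setMul (C D : Set G) : Set G :=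
  {g | ∃ c ∈ C, ∃ d ∈ D, E.src c = E.rng d ∧ g = E.mul c d}

/-- Natural-number set powers, with the convention `C⁰ = s(C)`. -/
def npowSet (C : Set G) : ℕ → Set G
  | 0 => E.src '' C
  | 1 => C
  | n + 2 => E.setMul (npowSet C (n + 1)) C

/-- Integer set powers: `C^(-m) = (C⁻¹)^m`. -/
def zpowSet (C : Set G) (m : ℤ) : Set G :=
  if 0 ≤ m then E.npowSet C m.toNat else E.npowSet (E.inv '' C) (-m).toNat

/-- Natural-number powers of an element, with `γ⁰ = s(γ)`. -/
def npow (γ : G) : ℕ → G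
  | 0 => E.src γ
  | n + 1 => E.mul (npow γ n) γ

/-- Integer powers of an element. -/
def zpow (γ : G) (m : ℤ) : G :=
  if 0 ≤ m then E.npow γ m.toNat else E.npow (E.inv γ) (-m).toNat

/-- The product of the sets `F i` over a list `l` of indices, multiplied on the
right by the set `T`. -/
def listSetProd {ι : Type*} (l : List ι) (F : ι → Set G) (T : Set G) : Set G :=
  l.foldr (fun i P => E.setMul (F i) P) T

/-- The product of the elements `f i` over a list `l` of indices, multiplied on the
right by `x`. -/
def listProd {ι : Type*} (l : List ι) (f : ι → G) (x : G) : G :=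
  l.foldr (fun i p => E.mul (f i) p) x

/-- `H` is a subgroup of the isotropy group `Iso(G)x = xG ∩ Gx` at the unit `x`. -/
def IsSubgroupAt (x : G) (H : Set G) : Prop :=
  (∀ a ∈ H, E.src a = x ∧ E.rng a = x) ∧ x ∈ H ∧
    (∀ a ∈ H, ∀ b ∈ H, E.mul a b ∈ H) ∧ ∀ a ∈ H, E.inv a ∈ H

/-- The subgroup of `Iso(G)x` generated by `gens`. -/
def subgroupClosureAt (x : G) (gens : Set G) : Set G :=
  ⋂₀ {H : Set G | E.IsSubgroupAt x H ∧ gens ⊆ H}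

/-- `q` restricts to a group homomorphism from the subgroup `H` of `Iso(G)x`
into the group `T` (a subgroup of the isotropy group at `y`). -/
def IsGroupHomOn (x y : G) (H : Set G) (T : Set G) (q : G → G) : Prop :=
  (∀ a ∈ H, q a ∈ T) ∧ q x = y ∧
    ∀ a ∈ H, ∀ b ∈ H, q (E.mul a b) = E.mul (q a) (q b)

end EtaleGroupoid

/-!
If `j a` vanishes off `Ii`, then every `lam y a` is block diagonal for the decomposition of the
fibre `Gy` into `Ii`-orbits, and its blocks over a unit `z` are convolution operators on the
group `Ii z`. It suffices to show that these blocks are small for `z` close to `x` and for `z`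
near infinity: then `a * iota d` approximates `a` as soon as `d` vanishes at `x` and equals `1` at
the remaining `z`.

Near infinity this holds because `a` is a limit of compactly supported functions. Near `x`, fix an
ultrafilter `U` converging to `x`. The limits along `U` of sections of `Ii` form an abelian group of
isotropy at `x`, on which `j a` vanishes: on `Ii x` by assumption and elsewhere because it vanishes
off `Ii`. Choosing sections makes this limit group asymptotically homomorphic to the groups `Ii z`,
and norms of convolution operators cannot increase along such asymptotic homomorphisms: an
abelian group has polynomial growth, so `‖f‖ ^ 4` is the limit of the `n`-th roots of
`‖(f* f) ^ n‖₁ ^ 2`, and the `ℓ¹`-norm does not increase under push-forward.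
-/

open Filter Topology

local notation "ℓ²(" S "," 𝕜 ")" => lp (fun _ : S => 𝕜) 2

section ExtendByZero

variable {𝕜 : Type*} [RCLike 𝕜] {S I : Type*}

theorem hasSum_norm_sq_extend (φ : S ↪ I) (v : ℓ²(S,𝕜)) :
    HasSum (fun i => ‖Function.extend φ v 0 i‖ ^ 2) (‖v‖ ^ 2) := by
  have hv : HasSum (fun s => ‖v s‖ ^ 2) (‖v‖ ^ 2) := by
    simpa using lp.hasSum_norm (p := 2) (by norm_num) v
  refine (φ.injective.hasSum_iff fun i hi => ?_).mp ?_
  · simp [Function.extend_apply' _ _ _ hi]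
  · simpa [Function.comp_def, φ.injective.extend_apply] using hv

theorem memℓp_extend (φ : S ↪ I) (v : ℓ²(S,𝕜)) : Memℓp (Function.extend φ v 0) 2 :=
  memℓp_gen (by simpa using (hasSum_norm_sq_extend φ v).summable)

variable (𝕜) in
/-- The isometric embedding `ℓ²(S) → ℓ²(I)` induced by an embedding `S ↪ I` of index sets. -/
noncomputable def extendByZero (φ : S ↪ I) : ℓ²(S,𝕜) →ₗᵢ[𝕜] ℓ²(I,𝕜) where
  toFun v := ⟨Function.extend φ v 0, memℓp_extend φ v⟩
  map_add' v w := Subtype.ext <|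
    (congrArg _ (add_zero 0).symm).trans (Function.extend_add φ (v : S → 𝕜) w 0 0)
  map_smul' c v := Subtype.ext <|
    (congrArg _ (smul_zero c).symm).trans (Function.extend_smul c φ (v : S → 𝕜) 0)
  norm_map' v := by
    have h := lp.hasSum_norm (p := 2) (by norm_num)
      (⟨Function.extend φ v 0, memℓp_extend φ v⟩ : ℓ²(I,𝕜))
    simp only [ENNReal.toReal_ofNat, Real.rpow_ofNat] at h
    exact (sq_eq_sq₀ (norm_nonneg _) (norm_nonneg _)).mp (h.unique (hasSum_norm_sq_extend φ v))

variable (φ : S ↪ I)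

@[simp]
theorem extendByZero_apply (v : ℓ²(S,𝕜)) (s : S) : extendByZero 𝕜 φ v (φ s) = v s :=
  φ.injective.extend_apply _ _ _

theorem extendByZero_apply_of_notMem (v : ℓ²(S,𝕜)) {i : I} (hi : i ∉ Set.range φ) :
    extendByZero 𝕜 φ v i = 0 :=
  Function.extend_apply' _ _ _ hi

@[simp]
theorem extendByZero_single [DecidableEq S] [DecidableEq I] (s : S) (c : 𝕜) :
    extendByZero 𝕜 φ (lp.single 2 s c) = lp.single 2 (φ s) c := by
  ext i
  by_cases hi : i ∈ Set.range φ
  · obtain ⟨t, rfl⟩ := hi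
    simp [lp.single_apply, Pi.single_apply]
  · have hne : i ≠ φ s := fun h => hi ⟨s, h.symm⟩
    rw [extendByZero_apply_of_notMem φ _ hi]
    simp [lp.single_apply, hne]

@[simp]
theorem adjoint_extendByZero_apply (w : ℓ²(I,𝕜)) (s : S) :
    (extendByZero 𝕜 φ).toContinuousLinearMap.adjoint w s = w (φ s) := by
  classical
  have h := ContinuousLinearMap.adjoint_inner_right
    (extendByZero 𝕜 φ).toContinuousLinearMap (lp.single 2 s 1) w
  simpa [lp.inner_single_left] using h

theorem extendByZero_adjoint_of_forall_notMem {w : ℓ²(I,𝕜)} (hw : ∀ i ∉ Set.range φ, w i = 0) :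
    extendByZero 𝕜 φ ((extendByZero 𝕜 φ).toContinuousLinearMap.adjoint w) = w := by
  ext i
  by_cases hi : i ∈ Set.range φ
  · obtain ⟨s, rfl⟩ := hi
    simp
  · rw [extendByZero_apply_of_notMem φ _ hi, hw i hi]

theorem inner_extendByZero_of_disjoint {T : Type*} {ψ : T ↪ I}
    (h : Disjoint (Set.range φ) (Set.range ψ)) (v : ℓ²(S,𝕜)) (w : ℓ²(T,𝕜)) :
    inner 𝕜 (extendByZero 𝕜 φ v) (extendByZero 𝕜 ψ w) = 0 := by
  rw [lp.inner_eq_tsum]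
  refine (tsum_congr fun i => ?_).trans tsum_zero
  by_cases hi : i ∈ Set.range φ
  · rw [extendByZero_apply_of_notMem ψ w (Set.disjoint_left.mp h hi), inner_zero_right]
  · rw [extendByZero_apply_of_notMem φ v hi, inner_zero_left]

end ExtendByZero

section Single

variable {𝕜 S : Type*} [RCLike 𝕜] [DecidableEq S]

theorem hasSum_smul_single (v : ℓ²(S,𝕜)) :
    HasSum (fun s => v s • (lp.single 2 s 1 : ℓ²(S,𝕜))) v := by
  simpa only [← lp.single_smul, smul_eq_mul, mul_one] using
    lp.hasSum_single (p := 2) (by norm_num) v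

theorem ext_apply_single {F : Type*} [NormedAddCommGroup F] [NormedSpace 𝕜 F]
    {T T' : ℓ²(S,𝕜) →L[𝕜] F} (h : ∀ s, T (lp.single 2 s 1) = T' (lp.single 2 s 1)) : T = T' := by
  ext v
  refine (T.hasSum (hasSum_smul_single v)).unique ?_
  simpa only [map_smul, h] using T'.hasSum (hasSum_smul_single v)

theorem dense_of_forall_single_mem {p : Submodule 𝕜 ℓ²(S,𝕜)} (h : ∀ s, lp.single 2 s 1 ∈ p) :
    Dense (p : Set ℓ²(S,𝕜)) := fun v =>
  mem_closure_of_tendsto (hasSum_smul_single v)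
    (.of_forall fun _ => p.sum_mem fun s _ => p.smul_mem _ (h s))

end Single

theorem opNorm_le_of_orthogonalFamily {𝕜 ι H : Type*} [RCLike 𝕜] [NormedAddCommGroup H]
    [InnerProductSpace 𝕜 H] {K : ι → Type*} [∀ q, NormedAddCommGroup (K q)]
    [∀ q, InnerProductSpace 𝕜 (K q)] {V : ∀ q, K q →ₗᵢ[𝕜] H} (hV : OrthogonalFamily 𝕜 K V)
    (hdense : Dense ((⨆ q, LinearMap.range (V q).toLinearMap : Submodule 𝕜 H) : Set H))
    {T : H →L[𝕜] H} {W : ∀ q, K q →L[𝕜] K q} (hT : ∀ q v, T (V q v) = V q (W q v)) {M : ℝ}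
    (hM : 0 ≤ M) (hW : ∀ q, ‖W q‖ ≤ M) : ‖T‖ ≤ M := by
  refine ContinuousLinearMap.opNorm_le_bound _ hM fun v =>
    hdense.induction ?_ (isClosed_le (by fun_prop) (by fun_prop)) v
  intro w hw
  obtain ⟨f, hf, rfl⟩ := (Submodule.mem_iSup_iff_exists_finsupp _ _).mp hw
  choose l hl using hf
  have hf' : (f.sum fun _ v => v) = ∑ q ∈ f.support, V q (l q) :=
    Finset.sum_congr rfl fun q _ => (hl q).symm
  have hTf : T (f.sum fun _ v => v) = ∑ q ∈ f.support, V q (W q (l q)) := by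
    rw [hf', map_sum]
    exact Finset.sum_congr rfl fun q _ => hT q (l q)
  refine le_of_sq_le_sq ?_ (by positivity)
  calc ‖T (f.sum fun _ v => v)‖ ^ 2 = ∑ q ∈ f.support, ‖W q (l q)‖ ^ 2 := by
        rw [hTf, hV.norm_sum]
    _ ≤ ∑ q ∈ f.support, M ^ 2 * ‖l q‖ ^ 2 := Finset.sum_le_sum fun q _ => by
        rw [← mul_pow]
        gcongr
        exact (W q).le_of_opNorm_le (hW q) (l q)
    _ = (M * ‖f.sum fun _ v => v‖) ^ 2 := by
        rw [← Finset.mul_sum, ← hV.norm_sum, ← hf', mul_pow]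

section GroupAlgebra

open MonoidAlgebra

variable {𝕜 Γ : Type*} [RCLike 𝕜] [Group Γ]

variable (𝕜) in
/-- The unitary representation of `Γ` on `ℓ²(Γ)` by left translation. -/
noncomputable def leftTranslation : Γ →* (ℓ²(Γ,𝕜) →L[𝕜] ℓ²(Γ,𝕜)) where
  toFun g := (extendByZero 𝕜 (mulLeftEmbedding g)).toContinuousLinearMap
  map_one' := by
    classical
    exact ext_apply_single fun s => by simp
  map_mul' g h := by
    classical
    exact ext_apply_single fun s => by simp [mul_assoc]

theorem leftTranslation_single [DecidableEq Γ] (g s : Γ) (c : 𝕜) :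
    leftTranslation 𝕜 g (lp.single 2 s c) = lp.single 2 (g * s) c :=
  extendByZero_single _ s c

theorem norm_leftTranslation_le (g : Γ) : ‖leftTranslation 𝕜 g‖ ≤ 1 :=
  LinearIsometry.norm_toContinuousLinearMap_le _

theorem star_leftTranslation (g : Γ) : star (leftTranslation 𝕜 g) = leftTranslation 𝕜 g⁻¹ := by
  classical
  refine ext_apply_single fun s => ?_
  ext t
  have h : ((star (leftTranslation 𝕜 g)) (lp.single 2 s 1)) t
      = (lp.single 2 s 1 : ℓ²(Γ,𝕜)) (g * t) :=
    adjoint_extendByZero_apply (mulLeftEmbedding g) _ t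
  rw [h, leftTranslation_single]
  simp [lp.single_apply, Pi.single_apply, eq_inv_mul_iff_mul_eq]

/-- The left regular representation of the group algebra of `Γ` on `ℓ²(Γ)`. -/
noncomputable def leftRegular : MonoidAlgebra 𝕜 Γ →ₐ[𝕜] (ℓ²(Γ,𝕜) →L[𝕜] ℓ²(Γ,𝕜)) :=
  MonoidAlgebra.lift 𝕜 _ Γ (leftTranslation 𝕜)

@[simp]
theorem leftRegular_single (g : Γ) (c : 𝕜) :
    leftRegular (single g c) = c • leftTranslation 𝕜 g :=
  MonoidAlgebra.lift_single _ _ _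

theorem leftRegular_single_apply [DecidableEq Γ] (f : MonoidAlgebra 𝕜 Γ) (s t : Γ) :
    leftRegular f (lp.single 2 t 1) s = f.coeff (s * t⁻¹) := by
  induction f using MonoidAlgebra.induction_linear with
  | zero => simp
  | add f g hf hg => simp [hf, hg]
  | single g c =>
    simp [leftTranslation_single, lp.single_apply, Pi.single_apply, coeff_single,
      Finsupp.single_apply, eq_mul_inv_iff_mul_eq, eq_comm]

theorem norm_leftRegular_sum_single_le {κ : Type*} (s : Finset κ) (u : κ → Γ) (c : κ → 𝕜) :
    ‖leftRegular (∑ k ∈ s, single (u k) (c k))‖ ≤ ∑ k ∈ s, ‖c k‖ := by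
  rw [map_sum]
  refine norm_sum_le_of_le _ fun k _ => ?_
  rw [leftRegular_single, norm_smul]
  exact mul_le_of_le_one_right (norm_nonneg _) (norm_leftTranslation_le _)

/-- The involution `f ↦ f*`, `f*(g) = conj (f g⁻¹)`, of the group algebra. -/
noncomputable def convStar (f : MonoidAlgebra 𝕜 Γ) : MonoidAlgebra 𝕜 Γ :=
  mapDomain (·⁻¹) (mapRingHom Γ (starRingEnd 𝕜) f)

@[simp]
theorem convStar_zero : convStar (0 : MonoidAlgebra 𝕜 Γ) = 0 := by simp [convStar]

@[simp]
theorem convStar_add (f g : MonoidAlgebra 𝕜 Γ) : convStar (f + g) = convStar f + convStar g := by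
  simp [convStar, mapDomain_add]

@[simp]
theorem convStar_single (g : Γ) (c : 𝕜) : convStar (single g c) = single g⁻¹ (starRingEnd 𝕜 c) := by
  simp [convStar, mapDomain_single]

theorem leftRegular_convStar (f : MonoidAlgebra 𝕜 Γ) :
    leftRegular (convStar f) = star (leftRegular f) := by
  induction f using MonoidAlgebra.induction_linear with
  | zero => simp
  | add f g hf hg => simp [hf, hg]
  | single g c => simp [star_leftTranslation]

theorem norm_leftRegular_convStar_mul_self (f : MonoidAlgebra 𝕜 Γ) :
    ‖leftRegular (convStar f * f)‖ = ‖leftRegular f‖ ^ 2 := by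
  rw [sq, ← CStarRing.norm_star_mul_self, ← leftRegular_convStar, ← map_mul]

/-- The `ℓ¹`-norm on the group algebra. -/
def l1Norm (f : MonoidAlgebra 𝕜 Γ) : ℝ := ∑ g ∈ f.coeff.support, ‖f.coeff g‖

theorem norm_leftRegular_mapDomain_le {S : Type*} (φ : S → Γ) (f : MonoidAlgebra 𝕜 S) :
    ‖leftRegular (mapDomain φ f)‖ ≤ l1Norm f := by
  have hsum : mapDomain φ f = ∑ g ∈ f.coeff.support, single (φ g) (f.coeff g) := by
    ext
    simp [mapDomain, Finsupp.mapDomain, Finsupp.sum]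
  rw [hsum]
  exact norm_leftRegular_sum_single_le _ _ _

theorem sum_norm_sq_coeff_le (f : MonoidAlgebra 𝕜 Γ) :
    ∑ g ∈ f.coeff.support, ‖f.coeff g‖ ^ 2 ≤ ‖leftRegular f‖ ^ 2 := by
  classical
  have hcoeff : ∀ g, leftRegular f (lp.single 2 1 1) g = f.coeff g := fun g => by
    rw [leftRegular_single_apply, inv_one, mul_one]
  have hsum : HasSum (fun g => ‖f.coeff g‖ ^ 2) (‖leftRegular f (lp.single 2 1 1)‖ ^ 2) := by
    simpa [hcoeff] using lp.hasSum_norm (p := 2) (by norm_num) (leftRegular f (lp.single 2 1 1))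
  refine (sum_le_hasSum _ (fun _ _ => by positivity) hsum).trans ?_
  gcongr
  simpa using (leftRegular f).le_opNorm (lp.single 2 1 1)

theorem l1Norm_sq_le (f : MonoidAlgebra 𝕜 Γ) :
    l1Norm f ^ 2 ≤ f.coeff.support.card * ‖leftRegular f‖ ^ 2 :=
  sq_sum_le_card_mul_sum_sq.trans (by gcongr; exact sum_norm_sq_coeff_le f)

end GroupAlgebra

section PolynomialGrowth

open MonoidAlgebra

variable {𝕜 Γ : Type*}

theorem exists_prod_pow_of_mem_support_pow [Semiring 𝕜] [CommMonoid Γ] {f : MonoidAlgebra 𝕜 Γ}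
    (n : ℕ) {g : Γ} (hg : g ∈ (f ^ n).coeff.support) :
    ∃ m : f.coeff.support → ℕ, (∀ s, m s ≤ n) ∧ ∏ s : f.coeff.support, (s : Γ) ^ m s = g := by
  classical
  induction n generalizing g with
  | zero =>
    rw [pow_zero, one_def, coeff_single] at hg
    exact ⟨fun _ => 0, fun _ => le_rfl,
      by simpa using (Finset.mem_singleton.mp (Finsupp.support_single_subset hg)).symm⟩
  | succ n ih =>
    rw [pow_succ] at hg
    obtain ⟨a, ha, b, hb, rfl⟩ := Finset.mem_mul.mp (support_coeff_mul_subset _ _ hg)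
    obtain ⟨m, hm, rfl⟩ := ih ha
    refine ⟨m + Pi.single ⟨b, hb⟩ 1, fun s => add_le_add (hm s) ?_, ?_⟩
    · rw [Pi.single_apply]
      split_ifs <;> simp
    · simp only [Pi.add_apply, pow_add, Finset.prod_mul_distrib, Pi.single_apply, pow_ite, pow_one,
        pow_zero, Fintype.prod_ite_eq']

theorem card_support_pow_le [Semiring 𝕜] [CommMonoid Γ] (f : MonoidAlgebra 𝕜 Γ) (n : ℕ) :
    (f ^ n).coeff.support.card ≤ (n + 1) ^ f.coeff.support.card := by
  classical
  have hsub : (f ^ n).coeff.support ⊆ Finset.univ.image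
      fun m : f.coeff.support → Fin (n + 1) => ∏ s : f.coeff.support, (s : Γ) ^ (m s : ℕ) := by
    intro g hg
    obtain ⟨m, hm, rfl⟩ := exists_prod_pow_of_mem_support_pow n hg
    exact Finset.mem_image.mpr ⟨fun s => ⟨m s, Nat.lt_succ_of_le (hm s)⟩, Finset.mem_univ _, rfl⟩
  refine (Finset.card_le_card hsub).trans (Finset.card_image_le.trans ?_)
  simp

open scoped IsMulCommutative in
theorem l1Norm_pow_sq_le [RCLike 𝕜] [Group Γ] [IsMulCommutative Γ] (f : MonoidAlgebra 𝕜 Γ)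
    {n : ℕ} (hn : 0 < n) :
    l1Norm (f ^ n) ^ 2 ≤ (n + 1) ^ f.coeff.support.card * (‖leftRegular f‖ ^ n) ^ 2 := by
  refine (l1Norm_sq_le _).trans ?_
  gcongr
  · exact_mod_cast card_support_pow_le f n
  · rw [map_pow]
    exact norm_pow_le' _ hn

theorem eventually_succ_pow_mul_pow_lt (k : ℕ) {c t : ℝ} (hc : 0 ≤ c) (hct : c < t) :
    ∀ᶠ n : ℕ in atTop, (n + 1 : ℝ) ^ k * c ^ n < t ^ n := by
  have ht : 0 < t := hc.trans_lt hct
  have ho := (isLittleO_pow_const_mul_const_pow_const_pow_of_norm_lt k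
    (by rwa [Real.norm_of_nonneg hc] : ‖c‖ < t)).const_mul_left ((2 : ℝ) ^ k)
  filter_upwards [ho.bound (one_half_pos (α := ℝ)), eventually_ge_atTop 1] with n hn h1
  have h1' : (1 : ℝ) ≤ n := by exact_mod_cast h1
  have htn : 0 < t ^ n := pow_pos ht n
  calc (n + 1 : ℝ) ^ k * c ^ n ≤ (2 * n) ^ k * c ^ n := by gcongr; linarith
    _ = ‖2 ^ k * ((n : ℝ) ^ k * c ^ n)‖ := by
      rw [Real.norm_of_nonneg (by positivity), mul_pow, mul_assoc]
    _ ≤ 1 / 2 * t ^ n := by rwa [Real.norm_of_nonneg htn.le] at hn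
    _ < t ^ n := by linarith

end PolynomialGrowth

section AsymptoticHom

open MonoidAlgebra

variable {𝕜 Γ ι : Type*} {Λ : ι → Type*} {U : Filter ι} {q : ∀ i, Γ → Λ i}

theorem eventually_mapDomain_mul [Semiring 𝕜] [Mul Γ] [∀ i, Mul (Λ i)]
    (hq : ∀ g h, ∀ᶠ i in U, q i (g * h) = q i g * q i h) (f k : MonoidAlgebra 𝕜 Γ) :
    ∀ᶠ i in U, mapDomain (q i) (f * k) = mapDomain (q i) f * mapDomain (q i) k := by
  induction f using MonoidAlgebra.induction_linear with
  | zero => simp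
  | add f f' hf hf' =>
    filter_upwards [hf, hf'] with i h h'
    simp [add_mul, h, h', mapDomain_add]
  | single g c =>
    induction k using MonoidAlgebra.induction_linear with
    | zero => simp
    | add k k' hk hk' =>
      filter_upwards [hk, hk'] with i h h'
      simp [mul_add, h, h', mapDomain_add]
    | single g' c' =>
      filter_upwards [hq g g'] with i h
      simp [single_mul_single, mapDomain_single, h]

variable [Group Γ] [∀ i, Group (Λ i)] (hq : ∀ g h, ∀ᶠ i in U, q i (g * h) = q i g * q i h)
include hq

theorem eventually_map_one : ∀ᶠ i in U, q i 1 = 1 :=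
  (hq 1 1).mono fun i h => by simpa using h

theorem eventually_map_inv (g : Γ) : ∀ᶠ i in U, q i g⁻¹ = (q i g)⁻¹ := by
  filter_upwards [eventually_map_one hq, hq g g⁻¹] with i h1 h
  exact eq_inv_of_mul_eq_one_right (by rw [← h, mul_inv_cancel, h1])

theorem eventually_mapDomain_pow [Semiring 𝕜] (f : MonoidAlgebra 𝕜 Γ) (n : ℕ) :
    ∀ᶠ i in U, mapDomain (q i) (f ^ n) = mapDomain (q i) f ^ n := by
  induction n with
  | zero =>
    filter_upwards [eventually_map_one hq] with i h
    simp [one_def, mapDomain_single, h]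
  | succ n ih =>
    filter_upwards [ih, eventually_mapDomain_mul hq (f ^ n) f] with i h h'
    rw [pow_succ, pow_succ, h', h]

variable [RCLike 𝕜]

theorem eventually_mapDomain_convStar (f : MonoidAlgebra 𝕜 Γ) :
    ∀ᶠ i in U, mapDomain (q i) (convStar f) = convStar (mapDomain (q i) f) := by
  induction f using MonoidAlgebra.induction_linear with
  | zero => simp
  | add f f' hf hf' =>
    filter_upwards [hf, hf'] with i h h'
    simp [h, h', mapDomain_add]
  | single g c =>
    filter_upwards [eventually_map_inv hq g] with i h
    simp [mapDomain_single, h]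

theorem eventually_leftRegular_mapDomain_convStar_mul (f : MonoidAlgebra 𝕜 Γ) :
    ∀ᶠ i in U, leftRegular (mapDomain (q i) (convStar f * f))
      = star (leftRegular (mapDomain (q i) f)) * leftRegular (mapDomain (q i) f) := by
  filter_upwards [eventually_mapDomain_mul hq (convStar f) f,
    eventually_mapDomain_convStar hq f] with i h h'
  rw [h, h', map_mul, leftRegular_convStar]

theorem eventually_norm_leftRegular_pow_le (f : MonoidAlgebra 𝕜 Γ) (m : ℕ) :
    ∀ᶠ i in U,
      (‖leftRegular (mapDomain (q i) f)‖ ^ 2) ^ 2 ^ m ≤ l1Norm ((convStar f * f) ^ 2 ^ m) := by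
  filter_upwards [eventually_leftRegular_mapDomain_convStar_mul hq f,
    eventually_mapDomain_pow hq (convStar f * f) (2 ^ m)] with i hstar hpow
  rw [sq, ← CStarRing.norm_star_mul_self, ← hstar,
    ← IsSelfAdjoint.norm_pow_two_pow (hstar ▸ IsSelfAdjoint.star_mul_self _), ← map_pow, ← hpow]
  exact norm_leftRegular_mapDomain_le _ _

end AsymptoticHom

theorem eventually_norm_leftRegular_mapDomain_lt {𝕜 Γ ι : Type*} [RCLike 𝕜] [Group Γ]
    [IsMulCommutative Γ] {Λ : ι → Type*} [∀ i, Group (Λ i)] {U : Filter ι} {q : ∀ i, Γ → Λ i}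
    (hq : ∀ g h, ∀ᶠ i in U, q i (g * h) = q i g * q i h) {f : MonoidAlgebra 𝕜 Γ} {t : ℝ}
    (ht : ‖leftRegular f‖ < t) :
    ∀ᶠ i in U, ‖leftRegular (MonoidAlgebra.mapDomain (q i) f)‖ < t := by
  have ht0 : 0 < t := (norm_nonneg _).trans_lt ht
  have htwo : Tendsto (fun m : ℕ => 2 ^ m) atTop atTop :=
    tendsto_pow_atTop_atTop_of_one_lt one_lt_two
  obtain ⟨m, hm⟩ := (htwo.eventually (eventually_succ_pow_mul_pow_lt
    (convStar f * f).coeff.support.card (by positivity) (pow_lt_pow_left₀ ht (norm_nonneg _)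
      four_ne_zero))).exists
  filter_upwards [eventually_norm_leftRegular_pow_le hq f m] with i hi
  set n := 2 ^ m
  have hn : 0 < n := by positivity
  refine lt_of_pow_lt_pow_left₀ (4 * n) ht0.le ?_
  calc ‖leftRegular (MonoidAlgebra.mapDomain (q i) f)‖ ^ (4 * n)
      = ((‖leftRegular (MonoidAlgebra.mapDomain (q i) f)‖ ^ 2) ^ n) ^ 2 := by ring
    _ ≤ l1Norm ((convStar f * f) ^ n) ^ 2 := by gcongr
    _ ≤ (n + 1) ^ (convStar f * f).coeff.support.card * (‖leftRegular (convStar f * f)‖ ^ n) ^ 2 :=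
      l1Norm_pow_sq_le _ hn
    _ = (n + 1) ^ (convStar f * f).coeff.support.card * (‖leftRegular f‖ ^ 4) ^ n := by
      rw [norm_leftRegular_convStar_mul_self]; ring
    _ < t ^ (4 * n) := by rw [pow_mul]; exact_mod_cast hm

open scoped ZeroAtInfty in
theorem exists_zeroAtInfty_eq_one_of_notMem {X : Type*} [TopologicalSpace X] [T2Space X]
    [LocallyCompactSpace X] {x : X} {s : Set X} (hs : s ∈ 𝓝 x ⊔ cocompact X) :
    ∃ d : C₀(X, ℂ), d x = 0 ∧ (∀ z ∉ s, d z = 1) ∧ ∀ z, ‖1 - d z‖ ≤ 1 := by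
  obtain ⟨hsx, hs_inf⟩ := mem_sup.mp hs
  obtain ⟨K, hK, hKs⟩ := mem_cocompact.mp hs_inf
  have hC : IsCompact (K \ interior s) := hK.diff isOpen_interior
  obtain ⟨f, hf1, hf0, hfK, hf⟩ := exists_continuous_one_zero_of_isCompact hC
    (isClosed_singleton (x := x))
    (Set.disjoint_singleton_right.mpr fun h => h.2 (mem_interior_iff_mem_nhds.mpr hsx))
  let d : C₀(X, ℂ) :=
    { toFun := fun z => (f z : ℂ)
      continuous_toFun := Complex.continuous_ofReal.comp f.continuous
      zero_at_infty' := (hfK.comp_left Complex.ofReal_zero).is_zero_at_infty }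
  have hd : ∀ z, d z = f z := fun _ => rfl
  refine ⟨d, by simp [hd, hf0 rfl], fun z hz => ?_, fun z => ?_⟩
  · have hzC : z ∈ K \ interior s :=
      ⟨not_not.mp fun h => hz (hKs h), fun h => hz (interior_subset h)⟩
    simp [hd, hf1 hzC]
  · rw [hd, ← Complex.ofReal_one, ← Complex.ofReal_sub, Complex.norm_real, Real.norm_eq_abs,
      abs_le]
    constructor <;> linarith [(hf z).1, (hf z).2]

namespace EtaleGroupoid

variable {G : Type*} [TopologicalSpace G]

section Algebra

variable (E : EtaleGroupoid G)

theorem mul_mul_inv_cancel {u η : G} (h : E.src u = E.rng η) :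
    E.mul (E.mul u η) (E.inv η) = u := by
  rw [E.mul_assoc' _ _ _ h (E.rng_inv η).symm, E.mul_inv_self, ← h, E.mul_src_self]

theorem mul_inv_mul_cancel {γ η : G} (h : E.src γ = E.src η) :
    E.mul (E.mul γ (E.inv η)) η = γ := by
  rw [E.mul_assoc' _ _ _ (h.trans (E.rng_inv η).symm) (E.src_inv η), E.inv_mul_self, ← h,
    E.mul_src_self]

theorem inv_mul_mul_cancel {u η : G} (h : E.src u = E.rng η) :
    E.mul (E.inv u) (E.mul u η) = η := by
  rw [← E.mul_assoc' _ _ _ (E.src_inv u) h, E.inv_mul_self, h, E.rng_self_mul]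

theorem src_mul_inv {γ η : G} (h : E.src γ = E.src η) : E.src (E.mul γ (E.inv η)) = E.rng η := by
  rw [E.src_mul _ _ (h.trans (E.rng_inv η).symm), E.src_inv]

theorem rng_mul_inv {γ η : G} (h : E.src γ = E.src η) : E.rng (E.mul γ (E.inv η)) = E.rng γ :=
  E.rng_mul _ _ (h.trans (E.rng_inv η).symm)

theorem inv_inv' (γ : G) : E.inv (E.inv γ) = γ := by
  have h := E.inv_mul_mul_cancel (u := E.inv γ) (η := γ) (E.src_inv γ)
  rwa [E.inv_mul_self, ← E.rng_inv, ← E.src_inv, E.mul_src_self] at h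

variable {E}

theorem rng_of_mem_unitSpace {x : G} (hx : x ∈ E.unitSpace) : E.rng x = x := by
  have h : E.src x = x := hx
  rw [← h, E.rng_src]

theorem inv_of_mem_unitSpace {x : G} (hx : x ∈ E.unitSpace) : E.inv x = x := by
  have h : E.src x = x := hx
  have hinv := E.rng_self_mul (E.inv x)
  rw [E.rng_inv, h, E.mul_inv_self, rng_of_mem_unitSpace hx] at hinv
  exact hinv.symm

end Algebra

section Topology

variable {E : EtaleGroupoid G} {ι : Type*} {l : Filter ι} {u v : ι → G} {γ δ : G}

theorem eventually_eq_of_tendsto (hu : Tendsto u l (𝓝 γ)) (hv : Tendsto v l (𝓝 γ))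
    (h : ∀ᶠ i in l, E.src (u i) = E.src (v i)) : ∀ᶠ i in l, u i = v i := by
  obtain ⟨O, hO, hγ, hinj, -⟩ := E.etale γ
  filter_upwards [hu (hO.mem_nhds hγ), hv (hO.mem_nhds hγ), h] with i hui hvi hi
  exact hinj hui hvi hi

theorem tendsto_mul (hu : Tendsto u l (𝓝 γ)) (hv : Tendsto v l (𝓝 δ)) (hγδ : E.src γ = E.rng δ)
    (h : ∀ᶠ i in l, E.src (u i) = E.rng (v i)) :
    Tendsto (fun i => E.mul (u i) (v i)) l (𝓝 (E.mul γ δ)) := by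
  have hmul : ContinuousOn (fun p : G × G => E.mul p.1 p.2) {p | E.src p.1 = E.rng p.2} :=
    continuousOn_iff_continuous_domRestrict.mpr E.continuous_mul
  exact (hmul (γ, δ) hγδ).tendsto.comp (tendsto_nhdsWithin_iff.mpr ⟨hu.prodMk_nhds hv, h⟩)

theorem finite_inter_Gx (E : EtaleGroupoid G) {K : Set G} (hK : IsCompact K) (x : G) :
    (K ∩ E.Gx x).Finite := by
  choose O hO hmem hinj _ using E.etale
  obtain ⟨t, -, ht⟩ := hK.elim_nhds_subcover O fun γ _ => (hO γ).mem_nhds (hmem γ)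
  refine (t.finite_toSet.biUnion (t := fun γ => O γ ∩ E.Gx x) fun γ _ =>
    Set.Subsingleton.finite fun a ha b hb => hinj γ ha.1 hb.1 (ha.2.trans hb.2.symm)).subset ?_
  rintro γ ⟨hγ, hx⟩
  obtain ⟨δ, hδ, hγδ⟩ := Set.mem_iUnion₂.mp (ht hγ)
  exact Set.mem_biUnion hδ ⟨hγδ, hx⟩

theorem src_eq_rng_of_mem_Ii (h : γ ∈ E.Ii) : E.src γ = E.rng γ :=
  (interior_subset h : γ ∈ E.Iso)

theorem unitSpace_subset_Ii : E.unitSpace ⊆ E.Ii :=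
  interior_maximal (fun _ hx => Eq.trans hx (rng_of_mem_unitSpace hx).symm) E.isOpen_unitSpace

theorem inv_mem_Ii (h : γ ∈ E.Ii) : E.inv γ ∈ E.Ii := by
  have hsub : E.inv ⁻¹' E.Ii ⊆ E.Iso := fun δ hδ => by
    have hδ' := src_eq_rng_of_mem_Ii (E := E) hδ
    rw [E.src_inv, E.rng_inv] at hδ'
    exact hδ'.symm
  refine interior_maximal hsub (isOpen_interior.preimage E.continuous_inv) ?_
  rwa [Set.mem_preimage, E.inv_inv']

theorem mul_mem_Ii (hopen : IsOpenMap E.src) (hγ : γ ∈ E.Ii) (hδ : δ ∈ E.Ii)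
    (h : E.src γ = E.src δ) : E.mul γ δ ∈ E.Ii := by
  have hγδ : E.src γ = E.rng δ := h.trans (src_eq_rng_of_mem_Ii hδ)
  have hsrc : E.src (E.mul γ δ) = E.src δ := E.src_mul _ _ hγδ
  have hdiv : Tendsto (fun p : G × G => E.mul p.1 (E.inv p.2))
      ((𝓝 (E.mul γ δ) ×ˢ 𝓝 δ) ⊓ 𝓟 {p | E.src p.1 = E.src p.2}) (𝓝 γ) := by
    have hlim := tendsto_mul (E := E) (l := (𝓝 (E.mul γ δ) ×ˢ 𝓝 δ) ⊓ 𝓟 {p | E.src p.1 = E.src p.2})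
      (tendsto_fst.mono_left inf_le_left)
      ((E.continuous_inv.tendsto δ).comp (tendsto_snd.mono_left inf_le_left))
      (hsrc.trans (E.rng_inv δ).symm)
      (eventually_inf_principal.mpr (.of_forall fun p hp => hp.trans (E.rng_inv p.2).symm))
    rwa [E.mul_mul_inv_cancel hγδ] at hlim
  obtain ⟨p, hp, q, hq, hpq⟩ := eventually_prod_iff.mp
    (eventually_inf_principal.mp (hdiv (isOpen_interior.mem_nhds hγ)))
  have hlift : ∀ᶠ ζ in 𝓝 (E.mul γ δ), ∃ η, (q η ∧ η ∈ E.Ii) ∧ E.src η = E.src ζ :=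
    (hsrc ▸ E.continuous_src.tendsto (E.mul γ δ))
      (hopen.image_mem_nhds (hq.and (isOpen_interior.mem_nhds hδ)))
  refine mem_interior_iff_mem_nhds.mpr ?_
  filter_upwards [hp, hlift] with ζ hζ ⟨η, ⟨hη, hηIi⟩, hηζ⟩
  have hquot : E.mul ζ (E.inv η) ∈ E.Ii := hpq hζ hη hηζ.symm
  have hiso := src_eq_rng_of_mem_Ii hquot
  rw [E.src_mul_inv hηζ.symm, E.rng_mul_inv hηζ.symm, ← src_eq_rng_of_mem_Ii hηIi] at hiso
  exact hηζ.symm.trans hiso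

end Topology

section IsotropyGroup

/-- The isotropy group `Iso(G)x = xG ∩ Gx` at a unit `x`. -/
abbrev IsotropyGroup (E : EtaleGroupoid G) (x : E.unitSpace) : Type _ :=
  {γ : G // E.src γ = x ∧ E.rng γ = x}

variable {E : EtaleGroupoid G} {x : E.unitSpace}

instance : Group (E.IsotropyGroup x) where
  mul a b := ⟨E.mul a b, (E.src_mul _ _ (a.2.1.trans b.2.2.symm)).trans b.2.1,
    (E.rng_mul _ _ (a.2.1.trans b.2.2.symm)).trans a.2.2⟩
  one := ⟨x, x.2, rng_of_mem_unitSpace x.2⟩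
  inv a := ⟨E.inv a, (E.src_inv _).trans a.2.2, (E.rng_inv _).trans a.2.1⟩
  mul_assoc a b c := Subtype.ext
    (E.mul_assoc' _ _ _ (a.2.1.trans b.2.2.symm) (b.2.1.trans c.2.2.symm))
  one_mul a := Subtype.ext ((congrArg (E.mul · a) a.2.2.symm).trans (E.rng_self_mul a))
  mul_one a := Subtype.ext ((congrArg (E.mul a) a.2.1.symm).trans (E.mul_src_self a))
  inv_mul_cancel a := Subtype.ext ((E.inv_mul_self a).trans a.2.1)

/-- `Ii x` as a subgroup of the isotropy group at `x`. -/
def interiorIsotropy (hopen : IsOpenMap E.src) (x : E.unitSpace) :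
    Subgroup (E.IsotropyGroup x) where
  carrier := {γ | (γ : G) ∈ E.Ii}
  mul_mem' {a b} ha hb := mul_mem_Ii hopen ha hb (a.2.1.trans b.2.1.symm)
  one_mem' := unitSpace_subset_Ii x.2
  inv_mem' ha := inv_mem_Ii ha

theorem finite_subgroup_mem (H : Subgroup (E.IsotropyGroup x)) {K : Set G} (hK : IsCompact K) :
    {h : H | (h : G) ∈ K}.Finite :=
  ((E.finite_inter_Gx hK x).preimage
    (Subtype.val_injective.comp Subtype.val_injective).injOn).subset fun h hh => ⟨hh, h.1.2.1⟩

/-- The restriction of `g ∈ C_c(G)` to a subgroup of an isotropy group, as an element of the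
group algebra. -/
noncomputable def restrict (H : Subgroup (E.IsotropyGroup x)) (g : G → ℂ)
    (hg : HasCompactSupport g) : MonoidAlgebra ℂ H :=
  .ofCoeff (Finsupp.ofSupportFinite (fun h : H => g h)
    ((finite_subgroup_mem H hg).subset fun _ hh => subset_tsupport g hh))

@[simp]
theorem coeff_restrict (H : Subgroup (E.IsotropyGroup x)) {g : G → ℂ} (hg : HasCompactSupport g)
    (h : H) : (restrict H g hg).coeff h = g h := rfl

end IsotropyGroup

section Limit

variable {E : EtaleGroupoid G} {x : E.unitSpace} {U : Filter E.unitSpace}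

theorem tendsto_val_of_le_nhds (hU : U ≤ 𝓝 x) :
    Tendsto (fun z : E.unitSpace => (z : G)) U (𝓝 (x : G)) :=
  (continuous_subtype_val.tendsto x).mono_left hU

/-- The subgroup of the isotropy group at `x` formed by the limits along `U` of sections
`z ↦ γ z ∈ Ii z`. -/
def limitIsotropy (hopen : IsOpenMap E.src) (hU : U ≤ 𝓝 x) : Subgroup (E.IsotropyGroup x) where
  carrier := {κ | ∃ γ : ∀ z, interiorIsotropy hopen z,
    Tendsto (fun z => ((γ z : E.IsotropyGroup z) : G)) U (𝓝 κ)}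
  mul_mem' {a b} := fun ⟨γ, hγ⟩ ⟨δ, hδ⟩ => ⟨γ * δ, tendsto_mul hγ hδ (a.2.1.trans b.2.2.symm)
    (.of_forall fun z => (γ z).1.2.1.trans (δ z).1.2.2.symm)⟩
  one_mem' := ⟨1, tendsto_val_of_le_nhds hU⟩
  inv_mem' {a} := fun ⟨γ, hγ⟩ => ⟨γ⁻¹, (E.continuous_inv.tendsto a).comp hγ⟩

variable {hopen : IsOpenMap E.src} {hU : U ≤ 𝓝 x}

/-- A choice, for each `κ` in the limit group, of a section of `Ii` converging to `κ`. -/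
noncomputable def transport (z : E.unitSpace) (κ : limitIsotropy hopen hU) :
    interiorIsotropy hopen z :=
  κ.2.choose z

theorem tendsto_transport (κ : limitIsotropy hopen hU) :
    Tendsto (fun z => ((transport z κ : E.IsotropyGroup z) : G)) U (𝓝 (κ : E.IsotropyGroup x)) :=
  κ.2.choose_spec

theorem eventually_eq_transport {γ : ∀ z, interiorIsotropy hopen z} {κ : limitIsotropy hopen hU}
    (hγ : Tendsto (fun z => ((γ z : E.IsotropyGroup z) : G)) U (𝓝 (κ : E.IsotropyGroup x))) :
    ∀ᶠ z in U, γ z = transport z κ := by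
  filter_upwards [eventually_eq_of_tendsto hγ (tendsto_transport κ)
    (.of_forall fun z => (γ z).1.2.1.trans (transport z κ).1.2.1.symm)] with z hz
  exact Subtype.ext (Subtype.ext hz)

theorem eventually_transport_mul (κ κ' : limitIsotropy hopen hU) :
    ∀ᶠ z in U, transport z (κ * κ') = transport z κ * transport z κ' := by
  have hmul : Tendsto (fun z => ((transport z κ * transport z κ' : interiorIsotropy hopen z) :
      E.IsotropyGroup z).1) U (𝓝 (κ * κ' : limitIsotropy hopen hU).1.1) :=
    tendsto_mul (tendsto_transport κ) (tendsto_transport κ') (κ.1.2.1.trans κ'.1.2.2.symm)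
      (.of_forall fun z => (transport z κ).1.2.1.trans (transport z κ').1.2.2.symm)
  exact (eventually_eq_transport hmul).mono fun _ => Eq.symm

variable [T2Space G]

theorem eventually_injOn_transport (F : Finset (limitIsotropy hopen hU)) :
    ∀ᶠ z in U, Set.InjOn (transport z) (F : Set (limitIsotropy hopen hU)) := by
  have hne : ∀ κ ∈ F, ∀ κ' ∈ F, ∀ᶠ z in U, κ ≠ κ' → transport z κ ≠ transport z κ' := by
    intro κ _ κ' _
    by_cases h : κ = κ'
    · exact .of_forall fun _ h' => absurd h h'
    · have hκ : (κ : G) ≠ κ' := fun h' => h (Subtype.ext (Subtype.ext h'))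
      filter_upwards [((tendsto_transport κ).prodMk_nhds (tendsto_transport κ')).eventually
        (isClosed_diagonal.isOpen_compl.mem_nhds hκ)] with z hz _ h'
      exact hz (congrArg (fun γ : interiorIsotropy hopen z => (γ.1.1 : G)) h')
  filter_upwards [(eventually_all_finset F).mpr fun κ hκ =>
    (eventually_all_finset F).mpr (hne κ hκ)] with z hz κ hκ κ' hκ'
  exact not_imp_not.mp (hz κ hκ κ' hκ')

theorem isMulCommutative_limitIsotropy [NeBot U] (hab : E.IsAbelianIi) :
    IsMulCommutative (limitIsotropy hopen hU) := by
  refine ⟨⟨fun κ κ' => ?_⟩⟩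
  refine Subtype.ext (Subtype.ext (tendsto_nhds_unique
    ((tendsto_transport (κ * κ')).congr' ?_) (tendsto_transport (κ' * κ))))
  filter_upwards [eventually_transport_mul κ κ', eventually_transport_mul κ' κ] with z h h'
  rw [h, h']
  exact hab _ (transport z κ).2 _ (transport z κ').2
    ((transport z κ).1.2.1.trans (transport z κ').1.2.1.symm)

end Limit

section Ultrafilter

variable [T2Space G] {E : EtaleGroupoid G} {x : E.unitSpace} {U : Ultrafilter E.unitSpace}
  {hopen : IsOpenMap E.src} {hU : (U : Filter E.unitSpace) ≤ 𝓝 x}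

theorem exists_tendsto_limitIsotropy (hU : (U : Filter E.unitSpace) ≤ 𝓝 x) {K : Set G}
    (hK : IsCompact K) (γ : ∀ z, interiorIsotropy hopen z) (hγ : ∀ᶠ z in U, ((γ z).1 : G) ∈ K) :
    ∃ κ : limitIsotropy hopen hU, (κ : G) ∈ K ∧
      Tendsto (fun z => ((γ z : E.IsotropyGroup z) : G)) U (𝓝 (κ : E.IsotropyGroup x)) := by
  obtain ⟨κ, hκK, hκ⟩ := hK.ultrafilter_le_nhds' (U.map fun z => ((γ z).1 : G)) hγ
  have hlim : Tendsto (fun z => ((γ z).1 : G)) U (𝓝 κ) := hκ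
  have hval := tendsto_val_of_le_nhds hU
  have hsrc : E.src κ = x := tendsto_nhds_unique ((E.continuous_src.tendsto κ).comp hlim)
    (hval.congr fun z => (γ z).1.2.1.symm)
  have hrng : E.rng κ = x := tendsto_nhds_unique ((E.continuous_rng.tendsto κ).comp hlim)
    (hval.congr fun z => (γ z).1.2.2.symm)
  exact ⟨⟨⟨κ, hsrc, hrng⟩, γ, hlim⟩, hκK, hlim⟩

theorem eventually_exists_transport_eq {K : Set G} (hK : IsCompact K) :
    ∀ᶠ z in U, ∀ γ : interiorIsotropy hopen z, (γ : G) ∈ K →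
      ∃ κ : limitIsotropy hopen hU, (κ : G) ∈ K ∧ transport z κ = γ := by
  -- Otherwise `U`-many fibres contain a point of `K` that is not transported from `K`; a section
  -- of such points converges along `U` to some `κ`, so it eventually is the transport of `κ`.
  by_contra hcon
  rw [← Ultrafilter.eventually_not] at hcon
  push Not at hcon
  let bad z (γ : interiorIsotropy hopen z) : Prop :=
    (γ : G) ∈ K ∧ ∀ κ : limitIsotropy hopen hU, (κ : G) ∈ K → transport z κ ≠ γ
  have hbad : ∀ᶠ z in U, bad z (Classical.epsilon (bad z)) :=
    hcon.mono fun z hz => Classical.epsilon_spec hz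
  obtain ⟨κ, hκK, hκ⟩ := exists_tendsto_limitIsotropy hU hK _ (hbad.mono fun z hz => hz.1)
  obtain ⟨z, hz, hz'⟩ := ((eventually_eq_transport hκ).and hbad).exists
  exact hz'.2 κ hκK hz.symm

end Ultrafilter

variable {E : EtaleGroupoid G}

section Restrict

open MonoidAlgebra

theorem restrict_eq_sum {x : E.unitSpace} (H : Subgroup (E.IsotropyGroup x)) {g : G → ℂ}
    (hg : HasCompactSupport g) {ι : Type*} (F : Finset ι) {φ : ι → H} (hφ : Set.InjOn φ F)
    (hF : ∀ h : H, g h ≠ 0 → ∃ i ∈ F, φ i = h) :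
    restrict H g hg = ∑ i ∈ F, single (φ i) (g (φ i)) := by
  classical
  ext h
  rw [coeff_restrict, coeff_sum, Finset.sum_apply']
  by_cases hh : g h = 0
  · refine hh.trans (Finset.sum_eq_zero fun i _ => ?_).symm
    by_cases hi : φ i = h <;> simp [coeff_single, hi, hh]
  · obtain ⟨i, hi, rfl⟩ := hF h hh
    rw [Finset.sum_eq_single_of_mem i hi fun i' hi' hne => ?_]
    · simp [coeff_single]
    · simp [coeff_single, hφ.ne hi' hi hne]

theorem eventually_restrict_eq_zero {g : G → ℂ} (hg : HasCompactSupport g) :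
    ∀ᶠ z in cocompact E.unitSpace, ∀ H : Subgroup (E.IsotropyGroup z), restrict H g hg = 0 := by
  have hK : IsCompact ((fun γ => (⟨E.src γ, E.src_src γ⟩ : E.unitSpace)) '' tsupport g) :=
    hg.isCompact.image (E.continuous_src.subtype_mk _)
  filter_upwards [hK.compl_mem_cocompact] with z hz H
  ext h
  rw [coeff_restrict]
  exact image_eq_zero_of_notMem_tsupport fun hh => hz ⟨h, hh, Subtype.ext h.1.2.1⟩

variable [T2Space G] {x : E.unitSpace} {U : Ultrafilter E.unitSpace}
  {hopen : IsOpenMap E.src} (hU : (U : Filter E.unitSpace) ≤ 𝓝 x) {g : G → ℂ}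

theorem tendsto_norm_leftRegular_restrict_sub (hgc : Continuous g) (hg : HasCompactSupport g) :
    Tendsto (fun z => ‖leftRegular (restrict (interiorIsotropy hopen z) g hg)
      - leftRegular (mapDomain (transport z) (restrict (limitIsotropy hopen hU) g hg))‖)
      U (𝓝 0) := by
  set F := (finite_subgroup_mem (limitIsotropy hopen hU) hg.isCompact).toFinset
  have hF : ∀ κ : limitIsotropy hopen hU, (κ : G) ∈ tsupport g → κ ∈ F := fun κ hκ => by
    simpa [F] using hκ
  have hlim : restrict (limitIsotropy hopen hU) g hg = ∑ κ ∈ F, single κ (g κ) :=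
    restrict_eq_sum _ hg F (φ := id) (Set.injOn_id _) fun κ hκ =>
      ⟨κ, hF κ (subset_tsupport g hκ), rfl⟩
  have hsum : Tendsto (fun z => ∑ κ ∈ F, ‖g (transport z κ) - g κ‖) U (𝓝 0) := by
    rw [← Finset.sum_const_zero (s := F)]
    refine tendsto_finsetSum _ fun κ _ => tendsto_iff_norm_sub_tendsto_zero.mp ?_
    exact (hgc.tendsto _).comp (tendsto_transport κ)
  refine squeeze_zero' (.of_forall fun _ => norm_nonneg _) ?_ hsum
  filter_upwards [eventually_injOn_transport F,
    eventually_exists_transport_eq (hopen := hopen) (hU := hU) hg.isCompact] with z hinj hex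
  have hz : restrict (interiorIsotropy hopen z) g hg
      = ∑ κ ∈ F, single (transport z κ) (g (transport z κ)) :=
    restrict_eq_sum _ hg F hinj fun γ hγ =>
      let ⟨κ, hκ, hκγ⟩ := hex γ (subset_tsupport g hγ)
      ⟨κ, hF κ hκ, hκγ⟩
  have hsub : restrict (interiorIsotropy hopen z) g hg
      - mapDomain (transport z) (restrict (limitIsotropy hopen hU) g hg)
      = ∑ κ ∈ F, single (transport z κ) (g (transport z κ) - g κ) := by
    have hmap : mapDomain (transport z) (∑ κ ∈ F, single κ (g κ))
        = ∑ κ ∈ F, single (transport (hopen := hopen) z κ) (g κ) :=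
      (map_sum (mapDomainLinearMap ℂ ℂ (transport z)) _ _).trans (by simp)
    simp [hz, hlim, hmap]
  rw [← map_sub, hsub]
  exact norm_leftRegular_sum_single_le _ _ _

theorem eventually_norm_leftRegular_restrict_lt (hab : E.IsAbelianIi) (hgc : Continuous g)
    (hg : HasCompactSupport g) {t : ℝ}
    (ht : ‖leftRegular (restrict (limitIsotropy hopen hU) g hg)‖ < t) :
    ∀ᶠ z in U, ‖leftRegular (restrict (interiorIsotropy hopen z) g hg)‖ < t := by
  have := isMulCommutative_limitIsotropy (hopen := hopen) (hU := hU) hab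
  obtain ⟨r, hr, hrt⟩ := exists_between ht
  filter_upwards [eventually_norm_leftRegular_mapDomain_lt eventually_transport_mul hr,
    (tendsto_norm_leftRegular_restrict_sub hU hgc hg).eventually_lt_const (sub_pos.mpr hrt)]
    with z hz hz'
  linarith [norm_le_norm_add_norm_sub' (leftRegular (restrict (interiorIsotropy hopen z) g hg))
    (leftRegular (mapDomain (transport z) (restrict (limitIsotropy hopen hU) g hg)))]

end Restrict

section Orbits

variable {z : E.unitSpace} (H : Subgroup (E.IsotropyGroup z)) {y : G} (η : E.Gx y)
  (hη : E.rng η = z)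

/-- The embedding `s ↦ sη` of a subgroup of the isotropy group at `r(η)` into the fibre of `η`. -/
def orbitEmbedding : H ↪ E.Gx y where
  toFun s := ⟨E.mul s η, (E.src_mul _ _ (s.1.2.1.trans hη.symm)).trans η.2⟩
  inj' s t h := by
    have hst : E.mul s η = E.mul t η := congrArg Subtype.val h
    refine Subtype.ext (Subtype.ext ?_)
    rw [← E.mul_mul_inv_cancel (s.1.2.1.trans hη.symm), hst,
      E.mul_mul_inv_cancel (t.1.2.1.trans hη.symm)]

theorem rng_orbitEmbedding (s : H) : E.rng (orbitEmbedding H η hη s) = z :=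
  (E.rng_mul _ _ (s.1.2.1.trans hη.symm)).trans s.1.2.2

theorem orbitEmbedding_mul (s t : H) :
    (orbitEmbedding H η hη (s * t) : G) = E.mul s (orbitEmbedding H η hη t) :=
  E.mul_assoc' _ _ _ (s.1.2.1.trans t.1.2.2.symm) (t.1.2.1.trans hη.symm)

theorem orbitEmbedding_mul_inv (s t : H) :
    E.mul (orbitEmbedding H η hη s) (E.inv (orbitEmbedding H η hη t)) = (s * t⁻¹ : H) := by
  have hs : (orbitEmbedding H η hη s : G)
      = E.mul (s * t⁻¹ : H) (orbitEmbedding H η hη t) := by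
    rw [← orbitEmbedding_mul, inv_mul_cancel_right]
  rw [hs, E.mul_mul_inv_cancel ((s * t⁻¹).1.2.1.trans (rng_orbitEmbedding H η hη t).symm)]

variable {hopen : IsOpenMap E.src}

theorem mem_range_orbitEmbedding {γ : E.Gx y} :
    γ ∈ Set.range (orbitEmbedding (interiorIsotropy hopen z) η hη)
      ↔ ∃ u ∈ E.Ii, E.src u = E.rng η ∧ (γ : G) = E.mul u η := by
  constructor
  · rintro ⟨s, rfl⟩
    exact ⟨s, s.2, s.1.2.1.trans hη.symm, rfl⟩
  · rintro ⟨u, hu, hs, hγ⟩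
    exact ⟨⟨⟨u, hs.trans hη, (src_eq_rng_of_mem_Ii hu).symm.trans (hs.trans hη)⟩, hu⟩,
      Subtype.ext hγ.symm⟩

theorem mul_inv_notMem_Ii_of_notMem_range {γ : E.Gx y}
    (hγ : γ ∉ Set.range (orbitEmbedding (interiorIsotropy hopen z) η hη))
    (s : interiorIsotropy hopen z) :
    E.mul γ (E.inv (orbitEmbedding (interiorIsotropy hopen z) η hη s)) ∉ E.Ii := by
  set ζ := orbitEmbedding (interiorIsotropy hopen z) η hη s
  intro hu
  have hsrc : E.src (γ : G) = E.src ζ := γ.2.trans ζ.2.symm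
  have hζ : E.src (E.mul γ (E.inv ζ)) = z :=
    (E.src_mul_inv hsrc).trans (rng_orbitEmbedding _ η hη s)
  let u : interiorIsotropy hopen z :=
    ⟨⟨_, hζ, (src_eq_rng_of_mem_Ii hu).symm.trans hζ⟩, hu⟩
  exact hγ ⟨u * s, Subtype.ext ((orbitEmbedding_mul _ η hη u s).trans
    (E.mul_inv_mul_cancel hsrc))⟩

/-- The equivalence relation on the fibre `Gy` whose classes are the orbits of `Ii`. -/
def orbitSetoid (hopen : IsOpenMap E.src) (y : G) : Setoid (E.Gx y) where
  r γ η := ∃ u ∈ E.Ii, E.src u = E.rng η ∧ (γ : G) = E.mul u η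
  iseqv :=
    { refl := fun η => ⟨E.rng η, unitSpace_subset_Ii (E.src_rng _), E.src_rng _,
        (E.rng_self_mul _).symm⟩
      symm := by
        rintro γ η ⟨u, hu, hs, hγ⟩
        refine ⟨E.inv u, inv_mem_Ii hu, ?_, ?_⟩
        · rw [E.src_inv, hγ, E.rng_mul _ _ hs]
        · rw [hγ, E.inv_mul_mul_cancel hs]
      trans := by
        rintro γ η ζ ⟨u, hu, hs, hγ⟩ ⟨v, hv, hs', hη⟩
        have huv : E.src u = E.rng v := by rw [hs, hη, E.rng_mul _ _ hs']
        refine ⟨E.mul u v, mul_mem_Ii hopen hu hv (huv.trans (src_eq_rng_of_mem_Ii hv).symm),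
          (E.src_mul _ _ huv).trans hs', ?_⟩
        rw [hγ, hη, E.mul_assoc' _ _ _ huv hs'] }

end Orbits

section Model

variable {R : Type*} [NonUnitalCStarAlgebra R]
  {lam : ∀ y : E.unitSpace, R →⋆ₙₐ[ℂ] (ℓ²(E.Gx y,ℂ) →L[ℂ] ℓ²(E.Gx y,ℂ))}
  {j : R → G → ℂ} {of : (G → ℂ) → R}

/-- The compression of `lam y b` to the orbit of `η` under a subgroup of the isotropy group at
`r(η)`, as an operator on `ℓ²` of that subgroup. -/
noncomputable def block (lam : ∀ y : E.unitSpace, R →⋆ₙₐ[ℂ] (ℓ²(E.Gx y,ℂ) →L[ℂ] ℓ²(E.Gx y,ℂ)))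
    {z y : E.unitSpace} (H : Subgroup (E.IsotropyGroup z)) (η : E.Gx y) (hη : E.rng η = z)
    (b : R) : ℓ²(H,ℂ) →L[ℂ] ℓ²(H,ℂ) :=
  (extendByZero ℂ (orbitEmbedding H η hη)).toContinuousLinearMap.adjoint ∘L lam y b ∘L
    (extendByZero ℂ (orbitEmbedding H η hη)).toContinuousLinearMap

section Block

variable {z y : E.unitSpace} (H : Subgroup (E.IsotropyGroup z)) (η : E.Gx y) (hη : E.rng η = z)

theorem norm_block_le (b : R) : ‖block lam H η hη b‖ ≤ ‖b‖ := by
  set V := extendByZero ℂ (orbitEmbedding H η hη)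
  have hV : ‖V.toContinuousLinearMap‖ ≤ 1 := V.norm_toContinuousLinearMap_le
  calc ‖block lam H η hη b‖
      ≤ ‖V.toContinuousLinearMap.adjoint‖ * (‖lam y b‖ * ‖V.toContinuousLinearMap‖) :=
        (ContinuousLinearMap.opNorm_comp_le _ _).trans
          (mul_le_mul_of_nonneg_left (ContinuousLinearMap.opNorm_comp_le _ _) (norm_nonneg _))
    _ ≤ 1 * (‖b‖ * 1) := by
        rw [LinearIsometryEquiv.norm_map]
        gcongr
        exact NonUnitalStarAlgHom.norm_apply_le (lam y) b
    _ = ‖b‖ := by ring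

theorem block_sub (a b : R) :
    block lam H η hη (a - b) = block lam H η hη a - block lam H η hη b := by
  simp [block]

end Block

variable [∀ y : E.unitSpace, DecidableEq (E.Gx y)]

/-- The unit `y` as an element of the fibre `Gy`. -/
abbrev unitPoint (y : E.unitSpace) : E.Gx y := ⟨y, y.2⟩

/-- `R` is the reduced C*-algebra of `E`, with regular representations `lam`, inclusion `of` of
`C_c(G)` and Renault's map `j`. -/
structure IsReducedModel (lam : ∀ y : E.unitSpace, R →⋆ₙₐ[ℂ] (ℓ²(E.Gx y,ℂ) →L[ℂ] ℓ²(E.Gx y,ℂ)))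
    (j : R → G → ℂ) (of : (G → ℂ) → R) : Prop where
  dense : Dense {a : R | ∃ g : G → ℂ, Continuous g ∧ HasCompactSupport g ∧ a = of g}
  lam_of : ∀ g : G → ℂ, Continuous g → HasCompactSupport g →
    ∀ (y : E.unitSpace) (η γ : E.Gx y), lam y (of g) (lp.single 2 η 1) γ = g (E.mul γ (E.inv η))
  norm_eq : ∀ a : R, ‖a‖ = ⨆ y : E.unitSpace, ‖lam y a‖
  j_eq : ∀ (a : R) (y : E.unitSpace) (γ : E.Gx y), j a γ = lam y a (lp.single 2 (unitPoint y) 1) γ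

theorem continuous_lam_single_apply
    (lam : ∀ y : E.unitSpace, R →⋆ₙₐ[ℂ] (ℓ²(E.Gx y,ℂ) →L[ℂ] ℓ²(E.Gx y,ℂ)))
    (y : E.unitSpace) (η γ : E.Gx y) : Continuous fun b => lam y b (lp.single 2 η 1) γ := by
  have hlam : Continuous (lam y) :=
    AddMonoidHomClass.continuous_of_bound (lam y) 1 fun b => by
      simpa using NonUnitalStarAlgHom.norm_apply_le (lam y) b
  exact (lp.evalCLM ℂ (fun _ : E.Gx y => ℂ) 2 γ).continuous.comp (hlam.clm_apply continuous_const)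

namespace IsReducedModel

variable (hM : IsReducedModel lam j of)
include hM

theorem exists_norm_sub_lt (b : R) {ε : ℝ} (hε : 0 < ε) :
    ∃ g : G → ℂ, Continuous g ∧ HasCompactSupport g ∧ ‖b - of g‖ < ε := by
  obtain ⟨_, ⟨g, hg, hgK, rfl⟩, h⟩ := Metric.mem_closure_iff.mp (hM.dense b) ε hε
  exact ⟨g, hg, hgK, by rwa [← dist_eq_norm]⟩

theorem norm_le_of_forall [Nonempty E.unitSpace] {b : R} {C : ℝ} (h : ∀ y, ‖lam y b‖ ≤ C) :
    ‖b‖ ≤ C := by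
  rw [hM.norm_eq]
  exact ciSup_le h

theorem j_eq_lam_src (b : R) (γ : G) :
    j b γ = lam ⟨E.src γ, E.src_src γ⟩ b (lp.single 2 (unitPoint _) 1) ⟨γ, rfl⟩ :=
  hM.j_eq b ⟨E.src γ, E.src_src γ⟩ ⟨γ, rfl⟩

theorem j_sub (a b : R) (γ : G) : j (a - b) γ = j a γ - j b γ := by
  simp [hM.j_eq_lam_src]

theorem j_of {g : G → ℂ} (hg : Continuous g) (hgK : HasCompactSupport g) (γ : G) :
    j (of g) γ = g γ := by
  rw [hM.j_eq_lam_src, hM.lam_of g hg hgK, inv_of_mem_unitSpace (E.src_src γ), E.mul_src_self]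

theorem norm_j_le (b : R) (γ : G) : ‖j b γ‖ ≤ ‖b‖ := by
  rw [hM.j_eq_lam_src]
  refine (lp.norm_apply_le_norm two_ne_zero _ _).trans ?_
  refine (ContinuousLinearMap.le_of_opNorm_le _ (NonUnitalStarAlgHom.norm_apply_le _ b) _).trans ?_
  rw [lp.norm_single two_pos, norm_one, mul_one]

theorem continuous_j (b : R) : Continuous (j b) := by
  refine continuous_of_uniform_approx_of_continuous fun u hu => ?_
  obtain ⟨ε, hε, hεu⟩ := Metric.mem_uniformity_dist.mp hu
  obtain ⟨g, hg, hgK, hb⟩ := hM.exists_norm_sub_lt b hε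
  refine ⟨g, hg, fun γ => hεu ?_⟩
  rw [dist_eq_norm, ← hM.j_of hg hgK γ, ← hM.j_sub]
  exact (hM.norm_j_le _ _).trans_lt hb

theorem lam_single_apply (y : E.unitSpace) (b : R) (η γ : E.Gx y) :
    lam y b (lp.single 2 η 1) γ = j b (E.mul γ (E.inv η)) := by
  have hj : Continuous fun b => j b (E.mul γ (E.inv η)) := by
    simp only [hM.j_eq_lam_src]
    exact continuous_lam_single_apply lam _ _ _
  refine congrFun ((continuous_lam_single_apply lam y η γ).ext_on hM.dense hj ?_) b
  rintro _ ⟨g, hg, hgK, rfl⟩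
  exact (hM.lam_of g hg hgK y η γ).trans (hM.j_of hg hgK _).symm

theorem j_star_mul_self_eq_zero_iff (b : R) (y : E.unitSpace) :
    j (star b * b) y = 0 ↔ ∀ γ : E.Gx y, j b γ = 0 := by
  have hsq : j (star b * b) y = ((‖lam y b (lp.single 2 (unitPoint y) 1)‖ ^ 2 : ℝ) : ℂ) := by
    have heval : ∀ v : ℓ²(E.Gx y,ℂ),
        v (unitPoint y) = inner ℂ (lp.single 2 (unitPoint y) (1 : ℂ)) v := fun v => by
      simp [lp.inner_single_left]
    rw [hM.j_eq _ y (unitPoint y), heval, map_mul, map_star, ContinuousLinearMap.star_eq_adjoint,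
      mul_apply_eq_comp, ContinuousLinearMap.adjoint_inner_right, inner_self_eq_norm_sq_to_K]
    norm_cast
  rw [hsq, Complex.ofReal_eq_zero, sq_eq_zero_iff, norm_eq_zero]
  simp only [hM.j_eq _ y]
  exact ⟨fun h γ => by rw [h]; rfl, fun h => lp.ext (funext h)⟩

-- `EtaleGroupoid` only asks `src` to be locally injective. It is open because `j (star f * f)` is
-- `u ↦ ∑ γ ∈ Gu, |f γ|²` on units: for a bump function `f` at `γ` this is continuous and nonzero at
-- `src γ`, so nearby fibres meet the support of `f`.
theorem isOpenMap_src [T2Space G] [LocallyCompactSpace G] : IsOpenMap E.src := by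
  refine IsOpenMap.of_nhds_le fun γ V hV => ?_
  obtain ⟨O, hOV, hO, hγO⟩ := mem_nhds_iff.mp (mem_map.mp hV)
  obtain ⟨f, hf1, hf0, hfK, -⟩ := exists_continuous_one_zero_of_isCompact
    (isCompact_singleton (x := γ)) hO.isClosed_compl
    (Set.disjoint_singleton_left.mpr fun h => h hγO)
  have hjf : ∀ δ, j (of fun δ => (f δ : ℂ)) δ = f δ :=
    hM.j_of (Complex.continuous_ofReal.comp f.continuous) (hfK.comp_left Complex.ofReal_zero)
  set b := of fun δ => (f δ : ℂ)
  have hγ : j (star b * b) (E.src γ) ≠ 0 := by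
    intro h
    have hfγ := (hM.j_star_mul_self_eq_zero_iff b ⟨E.src γ, E.src_src γ⟩).mp h ⟨γ, rfl⟩
    simp [hjf, hf1 rfl] at hfγ
  filter_upwards [(hM.continuous_j (star b * b)).continuousAt.eventually_ne hγ,
    E.isOpen_unitSpace.mem_nhds (E.src_src γ)] with u hu huG
  contrapose! hu
  refine (hM.j_star_mul_self_eq_zero_iff b ⟨u, huG⟩).mpr fun δ => ?_
  have hsrc : E.src δ = u := δ.2
  have hδ : (δ : G) ∉ O := fun h => hu (hsrc ▸ hOV h)
  simp [hjf, hf0 hδ]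

end IsReducedModel

section Block

variable {z y : E.unitSpace} (H : Subgroup (E.IsotropyGroup z)) (η : E.Gx y) (hη : E.rng η = z)

namespace IsReducedModel

variable (hM : IsReducedModel lam j of)
include hM

theorem block_eq_leftRegular {b : R} {k : MonoidAlgebra ℂ H} (hk : ∀ s : H, k.coeff s = j b s) :
    block lam H η hη b = leftRegular k := by
  classical
  refine ext_apply_single fun t => ?_
  ext s
  rw [leftRegular_single_apply, hk, ← orbitEmbedding_mul_inv H η hη, ← hM.lam_single_apply]
  simp [block, adjoint_extendByZero_apply]

theorem norm_block_le_add {a : R} {g : G → ℂ} (hg : Continuous g) (hgK : HasCompactSupport g) :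
    ‖block lam H η hη a‖ ≤ ‖a - of g‖ + ‖leftRegular (restrict H g hgK)‖ := by
  rw [← hM.block_eq_leftRegular H η hη (b := of g) fun s => (hM.j_of hg hgK s).symm]
  calc ‖block lam H η hη a‖
      ≤ ‖block lam H η hη a - block lam H η hη (of g)‖ + ‖block lam H η hη (of g)‖ :=
        norm_le_norm_sub_add _ _
    _ ≤ ‖a - of g‖ + ‖block lam H η hη (of g)‖ := by
        rw [← block_sub]
        gcongr
        exact norm_block_le H η hη _

theorem lam_extendByZero_eq_block {hopen : IsOpenMap E.src} {a : R}
    (ha : ∀ γ, γ ∉ E.Ii → j a γ = 0) (v : ℓ²(interiorIsotropy hopen z,ℂ)) :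
    lam y a (extendByZero ℂ (orbitEmbedding (interiorIsotropy hopen z) η hη) v)
      = extendByZero ℂ (orbitEmbedding (interiorIsotropy hopen z) η hη)
          (block lam (interiorIsotropy hopen z) η hη a v) := by
  classical
  set V := extendByZero ℂ (orbitEmbedding (interiorIsotropy hopen z) η hη)
  suffices lam y a ∘L V.toContinuousLinearMap
      = V.toContinuousLinearMap ∘L block lam (interiorIsotropy hopen z) η hη a from
    DFunLike.congr_fun this v
  refine ext_apply_single fun s => (extendByZero_adjoint_of_forall_notMem _ fun γ hγ => ?_).symm
  have hVs : V (lp.single 2 s 1) = lp.single 2 (orbitEmbedding _ η hη s) 1 :=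
    extendByZero_single _ s 1
  change lam y a (V (lp.single 2 s 1)) γ = 0
  rw [hVs, hM.lam_single_apply]
  exact ha _ (mul_inv_notMem_Ii_of_notMem_range η hη hγ s)

end IsReducedModel

end Block

namespace IsReducedModel

variable (hM : IsReducedModel lam j of)
include hM

section Diagonal

variable {b : R} {d : E.unitSpace → ℂ} (hd : ∀ u : E.unitSpace, j b u = d u)
  (hd' : ∀ γ, γ ∉ E.unitSpace → j b γ = 0)
include hd hd'

theorem lam_single_eq_smul {y z : E.unitSpace} {η : E.Gx y} (hη : E.rng η = z) :
    lam y b (lp.single 2 η 1) = d z • lp.single 2 η 1 := by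
  refine lp.ext (funext fun γ => ?_)
  rw [hM.lam_single_apply, lp.coeFn_smul, Pi.smul_apply]
  by_cases hγ : γ = η
  · subst hγ
    rw [E.mul_inv_self, hη, hd]
    simp
  · have hsrc : E.src (γ : G) = E.src η := γ.2.trans η.2.symm
    have hunit : E.mul γ (E.inv η) ∉ E.unitSpace := fun hu => hγ <| Subtype.ext <| by
      have hu' : E.src (E.mul γ (E.inv η)) = E.mul γ (E.inv η) := hu
      rw [← E.mul_inv_mul_cancel hsrc, ← hu', E.src_mul_inv hsrc, E.rng_self_mul]
    simp [hd' _ hunit, hγ]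

theorem lam_extendByZero_eq_smul {y z : E.unitSpace} (H : Subgroup (E.IsotropyGroup z))
    {η : E.Gx y} (hη : E.rng η = z) (v : ℓ²(H,ℂ)) :
    lam y b (extendByZero ℂ (orbitEmbedding H η hη) v)
      = d z • extendByZero ℂ (orbitEmbedding H η hη) v := by
  classical
  set V := (extendByZero ℂ (orbitEmbedding H η hη)).toContinuousLinearMap with hV
  suffices lam y b ∘L V = d z • V from DFunLike.congr_fun this v
  refine ext_apply_single fun s => ?_
  simp [hV, hM.lam_single_eq_smul hd hd' (rng_orbitEmbedding H η hη s)]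

theorem norm_sub_mul_le [Nonempty E.unitSpace] {hopen : IsOpenMap E.src} {a : R}
    (ha : ∀ γ, γ ∉ E.Ii → j a γ = 0) {M : ℝ} (hM0 : 0 ≤ M)
    (hblock : ∀ (z y : E.unitSpace) (η : E.Gx y) (hη : E.rng η = z),
      ‖1 - d z‖ * ‖block lam (interiorIsotropy hopen z) η hη a‖ ≤ M) :
    ‖a - a * b‖ ≤ M := by
  refine hM.norm_le_of_forall fun y => ?_
  let _ := orbitSetoid hopen (y : G)
  let z (q : Quotient (orbitSetoid hopen (y : G))) : E.unitSpace := ⟨E.rng q.out, E.src_rng _⟩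
  let φ q := orbitEmbedding (interiorIsotropy hopen (z q)) q.out rfl
  have hφ : ∀ q γ, γ ∈ Set.range (φ q) ↔ ⟦γ⟧ = q := fun q γ => by
    rw [mem_range_orbitEmbedding, ← Quotient.out_eq q, Quotient.eq, Quotient.out_eq]
    rfl
  refine opNorm_le_of_orthogonalFamily (V := fun q => extendByZero ℂ (φ q)) ?_ ?_
    (W := fun q => (1 - d (z q)) • block lam (interiorIsotropy hopen (z q)) q.out rfl a)
    (fun q v => ?_) hM0 fun q => ?_
  · intro q q' hq
    refine inner_extendByZero_of_disjoint _ (Set.disjoint_left.mpr fun γ hγ hγ' => hq ?_)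
    exact ((hφ q γ).mp hγ).symm.trans ((hφ q' γ).mp hγ')
  · classical
    refine dense_of_forall_single_mem fun γ => ?_
    obtain ⟨s, hs⟩ := (hφ ⟦γ⟧ γ).mpr rfl
    refine Submodule.mem_iSup_of_mem ⟦γ⟧ ⟨lp.single 2 s 1, ?_⟩
    simp [hs]
  · have hb := hM.lam_extendByZero_eq_smul hd hd' (interiorIsotropy hopen (z q)) (η := q.out) rfl v
    have ha' := hM.lam_extendByZero_eq_block (η := q.out) rfl ha v
    simp only [φ, map_sub, map_mul, sub_apply, mul_apply_eq_comp, hb, map_smul, ha', sub_smul,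
      one_smul, smul_apply]
  · rw [norm_smul]
    exact hblock (z q) y q.out rfl

end Diagonal

variable {a : R} {x : E.unitSpace} (ha : ∀ γ, γ ∉ E.Ii → j a γ = 0)
  (hax : ∀ γ ∈ E.Ii ∩ E.Gx x, j a γ = 0)
include ha hax

theorem norm_leftRegular_restrict_le (H : Subgroup (E.IsotropyGroup x)) {g : G → ℂ}
    (hg : Continuous g) (hgK : HasCompactSupport g) :
    ‖leftRegular (restrict H g hgK)‖ ≤ ‖a - of g‖ := by
  have hH : ∀ s : H, (restrict H g hgK).coeff s = j (of g - a) s := fun s => by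
    have has : j a s = 0 := by
      by_cases hs : (s : G) ∈ E.Ii
      · exact hax _ ⟨hs, s.1.2.1⟩
      · exact ha _ hs
    rw [coeff_restrict, hM.j_sub, hM.j_of hg hgK, has, sub_zero]
  rw [← hM.block_eq_leftRegular H (unitPoint x) (rng_of_mem_unitSpace x.2) hH, norm_sub_rev]
  exact norm_block_le _ _ _ _

variable [T2Space G] {hopen : IsOpenMap E.src}

theorem eventually_norm_block_le (hab : E.IsAbelianIi) {ε : ℝ} (hε : 0 < ε) :
    ∀ᶠ z : E.unitSpace in 𝓝 x ⊔ cocompact E.unitSpace,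
      ∀ (y : E.unitSpace) (η : E.Gx y) (hη : E.rng η = z),
      ‖block lam (interiorIsotropy hopen z) η hη a‖ ≤ ε := by
  obtain ⟨g, hg, hgK, hag⟩ := hM.exists_norm_sub_lt a (half_pos hε)
  suffices ∀ᶠ z : E.unitSpace in 𝓝 x ⊔ cocompact E.unitSpace,
      ‖leftRegular (restrict (interiorIsotropy hopen z) g hgK)‖ < ε / 2 from
    this.mono fun z hz y η hη =>
      (hM.norm_block_le_add _ η hη hg hgK).trans (by linarith)
  refine eventually_sup.mpr ⟨mem_iff_ultrafilter.mpr fun U hU => ?_, ?_⟩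
  · exact eventually_norm_leftRegular_restrict_lt hU hab hg hgK
      ((hM.norm_leftRegular_restrict_le ha hax _ hg hgK).trans_lt hag)
  · filter_upwards [eventually_restrict_eq_zero hgK] with z hz
    simpa [hz] using hε

end IsReducedModel

end Model

end EtaleGroupoid

open EtaleGroupoid in
open scoped ZeroAtInfty in
theorem stmt0_general {G : Type*} [TopologicalSpace G] [T2Space G] [LocallyCompactSpace G]
    {E : EtaleGroupoid G} [∀ y : E.unitSpace, DecidableEq (E.Gx y)] (hab : E.IsAbelianIi)
    {R : Type*} [NonUnitalCStarAlgebra R]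
    {lam : ∀ y : E.unitSpace, R →⋆ₙₐ[ℂ] (ℓ²(E.Gx y,ℂ) →L[ℂ] ℓ²(E.Gx y,ℂ))}
    {j : R → G → ℂ} {of : (G → ℂ) → R} (hM : IsReducedModel lam j of)
    {iota : C₀(E.unitSpace, ℂ) → R} (hiota : ∀ d (y : E.unitSpace), j (iota d) y = d y)
    (hiota' : ∀ d γ, γ ∉ E.unitSpace → j (iota d) γ = 0) {x : E.unitSpace} {a : R}
    (ha : ∀ γ, γ ∉ E.Ii → j a γ = 0) (hax : ∀ γ ∈ E.Ii ∩ E.Gx x, j a γ = 0) :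
    a ∈ closure {b : R | ∃ a' : R, (∀ γ, γ ∉ E.Ii → j a' γ = 0) ∧
      ∃ d : C₀(E.unitSpace, ℂ), d x = 0 ∧ b = a' * iota d} := by
  have : Nonempty E.unitSpace := ⟨x⟩
  have : LocallyCompactSpace E.unitSpace := E.isOpen_unitSpace.locallyCompactSpace
  have hopen := hM.isOpenMap_src
  refine Metric.mem_closure_iff.mpr fun ε hε => ?_
  let small : Set E.unitSpace := {z | ∀ (y : E.unitSpace) (η : E.Gx y) (hη : E.rng η = z),
    ‖block lam (interiorIsotropy hopen z) η hη a‖ ≤ ε / 2}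
  have hsmall : small ∈ 𝓝 x ⊔ cocompact E.unitSpace :=
    hM.eventually_norm_block_le ha hax hab (half_pos hε)
  obtain ⟨d, hdx, hd1, hd⟩ := exists_zeroAtInfty_eq_one_of_notMem hsmall
  refine ⟨a * iota d, ⟨a, ha, d, hdx, rfl⟩, ?_⟩
  rw [dist_eq_norm]
  refine (hM.norm_sub_mul_le (hiota d) (hiota' d) (hopen := hopen) ha (half_pos hε).le
    fun z y η hη => ?_).trans_lt (half_lt_self hε)
  by_cases hz : z ∈ small
  · exact (mul_le_of_le_one_left (norm_nonneg _) (hd z)).trans (hz y η hη)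
  · rw [hd1 z hz, sub_self, norm_zero, zero_mul]
    exact (half_pos hε).le

open EtaleGroupoid in
open scoped ZeroAtInfty in
open Classical in
/-- Theorem 1.1, the correction of [CRST, Lemma 5.2].
The reduced C*-algebra `C*_r(G)` is axiomatised as a C*-algebra `R` together with:
the regular representations `lam y` on `ℓ²(Gy)` for units `y`; a map
`of : C_c(G) → R` with dense range whose images act by the usual convolution
matrix coefficients `⟨λ_y(of g) e_η, e_γ⟩ = g(γη⁻¹)`; the reduced norm condition
`‖a‖ = sup_y ‖λ_y(a)‖`; Renault's `j`-map, `j(a)(γ) = ⟨λ_{s(γ)}(a) e_{s(γ)}, e_γ⟩`;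
and the canonical copy `iota` of `C₀(G⁽⁰⁾)` inside `R`, characterised by
`j(iota d) = d` on `G⁽⁰⁾` and `j(iota d) = 0` off `G⁽⁰⁾`.
With `A = {a : j(a) = 0 off Ii}` and
`J_x = closure {a·iota d : a ∈ A, d ∈ C₀(G⁽⁰⁾), d(x) = 0}`, every `a ∈ A` with
`j(a) = 0 on Ii x` lies in `J_x`. -/
theorem stmt0 {G : Type*} [TopologicalSpace G] [T2Space G] [LocallyCompactSpace G]
    (E : EtaleGroupoid G) (hab : E.IsAbelianIi)
    (R : Type*) [NormedRing R] [StarRing R] [CStarRing R] [NormedAlgebra ℂ R]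
    [StarModule ℂ R] [CompleteSpace R]
    (lam : ∀ y : ↥E.unitSpace,
      R →⋆ₐ[ℂ] (lp (fun _ : ↥(E.Gx ↑y) => ℂ) 2 →L[ℂ] lp (fun _ : ↥(E.Gx ↑y) => ℂ) 2))
    (j : R → G → ℂ)
    (of : (G → ℂ) → R)
    (hdense : Dense {a : R | ∃ g : G → ℂ, Continuous g ∧ HasCompactSupport g ∧ a = of g})
    (hof : ∀ g : G → ℂ, Continuous g → HasCompactSupport g →
      ∀ (y : ↥E.unitSpace) (η γ : ↥(E.Gx ↑y)),
        (lam y (of g)) (lp.single 2 η 1) γ = g (E.mul ↑γ (E.inv ↑η)))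
    (hnorm : ∀ a : R, ‖a‖ = ⨆ y : ↥E.unitSpace, ‖lam y a‖)
    (hj : ∀ (a : R) (y : ↥E.unitSpace) (γ : ↥(E.Gx ↑y)),
      j a ↑γ = (lam y a)
        (lp.single 2 (⟨(y : G), show E.src ↑y = ↑y from y.2⟩ : ↥(E.Gx ↑y)) 1) γ)
    (iota : C₀(↥E.unitSpace, ℂ) → R)
    (hiota1 : ∀ (d : C₀(↥E.unitSpace, ℂ)) (y : ↥E.unitSpace), j (iota d) ↑y = d y)
    (hiota2 : ∀ (d : C₀(↥E.unitSpace, ℂ)) (γ : G), γ ∉ E.unitSpace → j (iota d) γ = 0)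
    (x : ↥E.unitSpace)
    (a : R) (ha : ∀ γ, γ ∉ E.Ii → j a γ = 0)
    (hax : ∀ γ ∈ E.Ii ∩ E.Gx ↑x, j a γ = 0) :
    a ∈ closure {b : R |
      ∃ a' : R, (∀ γ, γ ∉ E.Ii → j a' γ = 0) ∧
      ∃ d : C₀(↥E.unitSpace, ℂ), d x = 0 ∧ b = a' * iota d} := by
  let _ : NonUnitalCStarAlgebra R := {}
  have hM : IsReducedModel (E := E) (fun y => (lam y : R →⋆ₙₐ[ℂ] _)) j of :=
    ⟨hdense, hof, hnorm, hj⟩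
  exact stmt0_general hab hM hiota1 hiota2 ha hax
end

section
/- Fix g ∈ C_c(G) and x ∈ G⁽⁰⁾. Then there is a finite set 𝔅 of open bisections of G and, for each B ∈ 𝔅, a function g_B ∈ C_c(B) ⊆ C_c(G) (a continuous function with compact support contained in B), such that g = Σ_{B∈𝔅} g_B and such that whenever B, B' ∈ 𝔅 satisfy B ∩ B' ∩ Gx ≠ ∅, then B = B'. -/
/-!
Source fibres are discrete: a bisection meets `Gx` in at most one point, and since `Gx` is closed,
every `γ` has an open bisection neighbourhood meeting `Gx` at most in `γ` itself. Bisections chosen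
in this way around distinct centres never meet over `Gx`, so it suffices to cover the support of
`g` by finitely many of them and to cut `g` up with a partition of unity. The partition is taken on
the compact support `K` only and extended by zero; multiplied by `g` its members become continuous,
because `g` vanishes on the closure of the complement of `K`.
-/

section CompactSupport

variable {X V : Type*} [TopologicalSpace X] [TopologicalSpace V]

theorem continuous_smul_of_continuousOn_of_support_subset {R : Type*} [TopologicalSpace R]
    [T1Space V] [Zero V] [SMulZeroClass R V] [ContinuousSMul R V] {K : Set X} (hK : IsClosed K)
    {φ : X → R} (hφ : ContinuousOn φ K) {g : X → V} (hg : Continuous g)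
    (hgK : Function.support g ⊆ K) : Continuous (φ • g) := by
  have g_eq_zero : ∀ y ∈ closure Kᶜ, g y = 0 :=
    closure_minimal (fun y hy => Function.notMem_support.1 fun h => hy (hgK h))
      (isClosed_singleton.preimage hg)
  have continuousOn_compl : ContinuousOn (φ • g) (closure Kᶜ) :=
    continuousOn_const.congr fun y hy => by rw [Pi.smul_apply', g_eq_zero y hy, smul_zero]
  have cover : K ∪ closure Kᶜ = Set.univ :=
    Set.univ_subset_iff.1 <|
      (Set.union_compl_self K).superset.trans (Set.union_subset_union_right K subset_closure)
  rw [← continuousOn_univ, ← cover]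
  exact (hφ.smul hg.continuousOn).union_of_isClosed continuousOn_compl hK isClosed_closure

theorem continuousOn_extend_subtypeVal {R : Type*} [TopologicalSpace R] {K : Set X} {f : K → R}
    (hf : Continuous f) (e : X → R) : ContinuousOn (Function.extend Subtype.val f e) K := by
  rw [continuousOn_iff_continuous_domRestrict]
  exact hf.congr fun y => (Subtype.val_injective.extend_apply f e y).symm

theorem exists_sum_eq_of_tsupport_subset_iUnion [T2Space X] [T1Space V] [AddCommGroup V]
    [Module ℝ V] [ContinuousSMul ℝ V] {ι : Type*} [Fintype ι] {g : X → V} (hg : Continuous g)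
    (hgc : HasCompactSupport g) {B : ι → Set X} (hB : ∀ i, IsOpen (B i))
    (hcover : tsupport g ⊆ ⋃ i, B i) :
    ∃ gB : ι → X → V,
      (∀ i, Continuous (gB i) ∧ HasCompactSupport (gB i) ∧ tsupport (gB i) ⊆ B i) ∧
      ∀ y, g y = ∑ i, gB i y := by
  have : CompactSpace (tsupport g) := isCompact_iff_compactSpace.1 hgc
  obtain ⟨f, hfB⟩ := PartitionOfUnity.exists_isSubordinate (X := tsupport g) isClosed_univ
    (fun i => Subtype.val ⁻¹' B i) (fun i => (hB i).preimage continuous_subtype_val)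
    (fun y _ => by simpa only [Set.mem_iUnion, Set.mem_preimage] using hcover y.2)
  have f_compact (i : ι) : HasCompactSupport (f i) := .of_compactSpace (f i)
  refine ⟨fun i => Function.extend Subtype.val (f i) 0 • g, fun i => ⟨?_, ?_, ?_⟩, fun y => ?_⟩
  · exact continuous_smul_of_continuousOn_of_support_subset (isClosed_tsupport g)
      (continuousOn_extend_subtypeVal (f i).continuous 0) hg (subset_tsupport g)
  · exact hgc.smul_left
  · calc tsupport (Function.extend Subtype.val (f i) 0 • g)
        ⊆ tsupport (Function.extend Subtype.val (f i) 0) := tsupport_smul_subset_left _ _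
      _ ⊆ Subtype.val '' tsupport (f i) :=
        (f_compact i).tsupport_extend_zero_subset continuous_subtype_val
      _ ⊆ B i := Set.image_subset_iff.2 (hfB i)
  · simp only [Pi.smul_apply', ← Finset.sum_smul]
    by_cases hy : y ∈ tsupport g
    · lift y to tsupport g using hy
      have sum_eq_one : ∑ i, f i y = 1 := by
        rw [← finsum_eq_sum_of_fintype, f.sum_eq_one (Set.mem_univ y)]
      simp only [Subtype.val_injective.extend_apply, sum_eq_one, one_smul]
    · rw [image_eq_zero_of_notMem_tsupport hy, smul_zero]

theorem exists_fin_injective_nhds_subcover {K : Set X} (hK : IsCompact K) {U : X → Set X}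
    (hU : ∀ y ∈ K, U y ∈ nhds y) :
    ∃ (n : ℕ) (c : Fin n → X), Function.Injective c ∧ K ⊆ ⋃ i, U (c i) := by
  obtain ⟨t, -, ht⟩ := hK.elim_nhds_subcover U hU
  refine ⟨t.card, fun i => t.equivFin.symm i,
    Subtype.val_injective.comp t.equivFin.symm.injective, ?_⟩
  calc K ⊆ ⋃ y ∈ t, U y := ht
    _ = ⋃ y : t, U y := Set.biUnion_eq_iUnion _ _
    _ = ⋃ i, U (t.equivFin.symm i) := (t.equivFin.symm.surjective.iUnion_comp _).symm

end CompactSupport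

namespace EtaleGroupoid

variable {G : Type*} [TopologicalSpace G] (E : EtaleGroupoid G)

theorem IsOpenBisection.mono {E : EtaleGroupoid G} {U V : Set G} (hU : E.IsOpenBisection U)
    (hV : IsOpen V) (hVU : V ⊆ U) : E.IsOpenBisection V :=
  ⟨hV, hU.2.1.mono hVU, hU.2.2.mono hVU⟩

theorem exists_isOpenBisection_mem (γ : G) : ∃ U, E.IsOpenBisection U ∧ γ ∈ U := by
  obtain ⟨U, hU, hγU, src_injOn_U, -⟩ := E.etale γ
  obtain ⟨V, hV, hγV, src_injOn_V, -⟩ := E.etale (E.inv γ)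
  have rng_injOn : Set.InjOn E.rng (U ∩ E.inv ⁻¹' V) := by
    intro a ha b hb hab
    have inv_eq : E.inv a = E.inv b := src_injOn_V ha.2 hb.2 (by rw [E.src_inv, E.src_inv, hab])
    exact src_injOn_U ha.1 hb.1 (by rw [← E.rng_inv, ← E.rng_inv, inv_eq])
  exact ⟨U ∩ E.inv ⁻¹' V, ⟨hU.inter (hV.preimage E.continuous_inv),
    src_injOn_U.mono Set.inter_subset_left, rng_injOn⟩, hγU, hγV⟩

theorem isClosed_Gx [T1Space G] (x : G) : IsClosed (E.Gx x) :=
  isClosed_singleton.preimage E.continuous_src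

theorem exists_isOpenBisection_inter_Gx_subset [T1Space G] (x γ : G) :
    ∃ U, E.IsOpenBisection U ∧ γ ∈ U ∧ U ∩ E.Gx x ⊆ {γ} := by
  obtain ⟨U, hU, hγ⟩ := E.exists_isOpenBisection_mem γ
  by_cases hx : γ ∈ E.Gx x
  · exact ⟨U, hU, hγ, fun δ hδ => hU.2.1 hδ.1 hγ (hδ.2.trans hx.symm)⟩
  · exact ⟨U \ E.Gx x, hU.mono (hU.1.sdiff (E.isClosed_Gx x)) Set.sdiff_subset, ⟨hγ, hx⟩,
      fun δ hδ => (hδ.1.2 hδ.2).elim⟩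

end EtaleGroupoid

theorem stmt3_general {G V : Type*} [TopologicalSpace G] [T2Space G] (E : EtaleGroupoid G)
    [TopologicalSpace V] [T1Space V] [AddCommGroup V] [Module ℝ V] [ContinuousSMul ℝ V]
    {g : G → V} (hg : Continuous g) (hgc : HasCompactSupport g) (x : G) :
    ∃ (n : ℕ) (B : Fin n → Set G) (gB : Fin n → G → V),
      (∀ i, E.IsOpenBisection (B i)) ∧
      (∀ i, Continuous (gB i) ∧ HasCompactSupport (gB i) ∧ tsupport (gB i) ⊆ B i) ∧
      (∀ γ, g γ = ∑ i, gB i γ) ∧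
      (∀ i j, (B i ∩ B j ∩ E.Gx x).Nonempty → i = j) := by
  choose U hU mem_U U_inter_Gx using E.exists_isOpenBisection_inter_Gx_subset x
  obtain ⟨n, c, c_injective, hcover⟩ :=
    exists_fin_injective_nhds_subcover hgc fun γ _ => (hU γ).1.mem_nhds (mem_U γ)
  obtain ⟨gB, hgB, hsum⟩ :=
    exists_sum_eq_of_tsupport_subset_iUnion hg hgc (fun i => (hU (c i)).1) hcover
  refine ⟨n, fun i => U (c i), gB, fun i => hU (c i), hgB, hsum, ?_⟩
  rintro i j ⟨γ, ⟨hi, hj⟩, hγ⟩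
  have γ_eq_left : γ = c i := U_inter_Gx (c i) ⟨hi, hγ⟩
  have γ_eq_right : γ = c j := U_inter_Gx (c j) ⟨hj, hγ⟩
  exact c_injective (γ_eq_left.symm.trans γ_eq_right)

open EtaleGroupoid in
/-- Lemma 1.4: `g ∈ C_c(G)` can be written as a finite sum of functions
supported in open bisections such that two bisections of the family meeting over a
common point of `Gx` coincide. -/
theorem stmt3 {G : Type*} [TopologicalSpace G] [T2Space G] [LocallyCompactSpace G]
    (E : EtaleGroupoid G)
    (g : G → ℂ) (hg : Continuous g) (hgc : HasCompactSupport g)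
    (x : G) (hx : x ∈ E.unitSpace) :
    ∃ (n : ℕ) (B : Fin n → Set G) (gB : Fin n → G → ℂ),
      (∀ i, E.IsOpenBisection (B i)) ∧
      (∀ i, Continuous (gB i) ∧ HasCompactSupport (gB i) ∧ tsupport (gB i) ⊆ B i) ∧
      (∀ γ, g γ = ∑ i, gB i γ) ∧
      (∀ i j, (B i ∩ B j ∩ E.Gx x).Nonempty → B i = B j) := by
  obtain ⟨n, B, gB, hB, hgB, hsum, hinj⟩ := stmt3_general E hg hgc x
  exact ⟨n, B, gB, hB, hgB, hsum, fun i j h => congrArg B (hinj i j h)⟩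
end

section
/- Let C be an open bisection of G, let g ∈ C_c(G) with supp(g) ⊆ C, and let x ∈ G⁽⁰⁾ be such that supp(g) ∩ Iicl x = ∅. Then there is an open neighbourhood U ⊆ G⁽⁰⁾ of x such that supp°(g)·U ∩ Ii = ∅, where supp°(g)·U := {γ ∈ supp°(g) : s(γ) ∈ U}. -/
/-! The part of `tsupport g` lying in the closure of `Ii` is compact, so its image under `s` is
closed in the Hausdorff unit space. The hypothesis says that `x` is not in this image, so its
complement in the unit space is the required neighbourhood. -/

namespace EtaleGroupoid

variable {G : Type*} [TopologicalSpace G] (E : EtaleGroupoid G)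

theorem isOpen_unitSpace_sdiff_image_src [T2Space E.unitSpace] {K : Set G} (hK : IsCompact K) :
    IsOpen (E.unitSpace \ E.src '' K) := by
  let s : G → E.unitSpace := fun γ ↦ ⟨E.src γ, E.src_src γ⟩
  have hs : Continuous s := E.continuous_src.subtype_mk E.src_src
  have hcompl : E.unitSpace \ E.src '' K = Subtype.val '' (s '' K)ᶜ := by
    rw [Set.image_compl_eq_range_sdiff_image Subtype.val_injective, Subtype.range_val,
      Set.image_image]
  rw [hcompl]
  exact E.isOpen_unitSpace.isOpenMap_subtype_val _ (hK.image hs).isClosed.isOpen_compl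

theorem exists_isOpen_inter_preimage_src_subset [T2Space E.unitSpace] {K W : Set G}
    (hK : IsCompact K) (hW : IsOpen W) {x : G} (hx : x ∈ E.unitSpace) (hxW : K ∩ E.Gx x ⊆ W) :
    ∃ U : Set G, IsOpen U ∧ x ∈ U ∧ U ⊆ E.unitSpace ∧ K ∩ E.src ⁻¹' U ⊆ W := by
  refine ⟨E.unitSpace \ E.src '' (K \ W), E.isOpen_unitSpace_sdiff_image_src (hK.diff hW),
    ⟨hx, ?_⟩, Set.sdiff_subset, ?_⟩
  · rintro ⟨γ, ⟨hγK, hγW⟩, hγx⟩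
    exact hγW (hxW ⟨hγK, hγx⟩)
  · rintro γ ⟨hγK, -, hγU⟩
    by_contra hγW
    exact hγU ⟨γ, ⟨hγK, hγW⟩, rfl⟩

end EtaleGroupoid

theorem stmt12_general {G M : Type*} [TopologicalSpace G] [Zero M] (E : EtaleGroupoid G)
    [T2Space E.unitSpace] (g : G → M) (hgc : HasCompactSupport g) (x : G) (hx : x ∈ E.unitSpace)
    (hdisj : tsupport g ∩ (E.Iicl ∩ E.Gx x) = ∅) :
    ∃ U : Set G, IsOpen U ∧ x ∈ U ∧ U ⊆ E.unitSpace ∧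
      ∀ γ ∈ Function.support g, E.src γ ∈ U → γ ∉ E.Ii := by
  have hfibre : tsupport g ∩ E.Gx x ⊆ E.Iiclᶜ := fun γ hγ hγI ↦
    Set.eq_empty_iff_forall_notMem.mp hdisj γ ⟨hγ.1, hγI, hγ.2⟩
  obtain ⟨U, hUo, hxU, hU, hgU⟩ := E.exists_isOpen_inter_preimage_src_subset
    hgc.isCompact isClosed_closure.isOpen_compl hx hfibre
  exact ⟨U, hUo, hxU, hU, fun γ hγ hγU hγI ↦
    hgU ⟨subset_tsupport g hγ, hγU⟩ (subset_closure hγI)⟩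

open EtaleGroupoid in
/-- if `supp(g) ⊆ C` misses `Iicl x`, then for some open neighbourhood
`U ⊆ G⁽⁰⁾` of `x` the set `supp°(g)·U = {γ ∈ supp°(g) : s(γ) ∈ U}` misses `Ii`. -/
theorem stmt12 {G : Type*} [TopologicalSpace G] [T2Space G] [LocallyCompactSpace G]
    (E : EtaleGroupoid G) (C : Set G) (hC : E.IsOpenBisection C)
    (g : G → ℂ) (hg : Continuous g) (hgc : HasCompactSupport g)
    (hsupp : tsupport g ⊆ C) (x : G) (hx : x ∈ E.unitSpace)
    (hdisj : tsupport g ∩ (E.Iicl ∩ E.Gx x) = ∅) :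
    ∃ U : Set G, IsOpen U ∧ x ∈ U ∧ U ⊆ E.unitSpace ∧
      ∀ γ ∈ Function.support g, E.src γ ∈ U → γ ∉ E.Ii :=
  stmt12_general E g hgc x hx hdisj
end
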